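/- arXiv:0802.1925 — 2 statements merged into one kernel-verified Lean document; each statement's English description precedes it below -/
import Mathlib

section
/- Let p be a prime, n ≥ 1, and Ψ : ℕ → ℝ₊ be monotonically decreasing with ∑_{h=1}^∞ Ψ(h) < ∞. Then the set of ω ∈ ℚ_p such that |ω − α|_p < H(α)^{-n} Ψ(H(α)) holds for infinitely many algebraic numbers α ∈ ℚ_p of degree n has Haar measure zero. -/
/-!
This is the convergence half of a Khintchine-type theorem, and it follows from the Borel–Cantelli
lemma applied to the sets `E h` of those `ω` lying within `h ^ (-n) * Ψ h` of a `p`-adic root of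
some integer polynomial of degree at most `n` and height `h`. Some coefficient of such a polynomial
is `±h`, and the other `n` lie in `[-h, h]`, so there are `O(h ^ n)` of them
(`card_polysOfHeight_le`), each with at most `n` roots. A `p`-adic ball of radius `r ≤ 1` has
measure `O(r)` (`measure_ball_le`), because `ℤ_p` contains about `1 / r` disjoint translates of it.
Hence `μ (E h) = O(Ψ h)`, which is summable. Finally, an `ω` approximated by infinitely many `α`
lies in infinitely many `E h`, since only finitely many `α` have a given height.
-/

open Polynomial MeasureTheory

/-- The naive height of an integer polynomial: the maximum of the absolute
values of its coefficients. -/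
def polyHeight (P : Polynomial ℤ) : ℕ := P.support.sup fun i => (P.coeff i).natAbs

/-- A `p`-adic ball of radius `r ≤ 1` has measure at most `p * r` times that of `ℤ_p`. With
`p ^ (-(k + 1)) < r ≤ p ^ (-k)`, the balls of radius `r` around `0, 1, …, p ^ k - 1` are disjoint
and contained in `ℤ_p`. -/
lemma measure_ball_le (p : ℕ) [Fact p.Prime] [MeasurableSpace ℚ_[p]] [BorelSpace ℚ_[p]]
    (μ : Measure ℚ_[p]) [μ.IsAddHaarMeasure] (a : ℚ_[p]) {r : ℝ} (hr : 0 < r) (hr1 : r ≤ 1) :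
    μ (Metric.ball a r) ≤ ENNReal.ofReal (p * r) * μ (Metric.closedBall 0 1) := by
  have hp1 : (1 : ℝ) < p := by exact_mod_cast (Fact.out : p.Prime).one_lt
  have hp0 : (0 : ℝ) < p := by linarith
  obtain ⟨k, hk1, hk2⟩ := exists_nat_pow_near_of_lt_one hr hr1 (inv_pos.2 hp0)
    (inv_lt_one_of_one_lt₀ hp1)
  have htrans : ∀ b : ℚ_[p], μ (Metric.ball b r) = μ (Metric.ball 0 r) := by
    intro b
    have h := measure_preimage_add μ (-b) (Metric.ball (0 : ℚ_[p]) r)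
    rw [← h]
    congr 1
    ext x
    simp [dist_eq_norm, neg_add_eq_sub]
  have hdisj : Set.PairwiseDisjoint (↑(Finset.range (p ^ k)) : Set ℕ)
      (fun i : ℕ => Metric.ball (i : ℚ_[p]) r) := by
    intro i hi j hj hij
    refine Set.disjoint_left.2 fun x hx hx' => hij ?_
    simp only [Finset.coe_range, Set.mem_Iio] at hi hj
    rw [Metric.mem_ball, dist_eq_norm] at hx hx'
    have h1 : ‖(((i : ℤ) - (j : ℤ) : ℤ) : ℚ_[p])‖ ≤ (p : ℝ) ^ (-(k : ℤ)) := by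
      have h2 : (((i : ℤ) - (j : ℤ) : ℤ) : ℚ_[p]) = (x - j) + (i - x) := by push_cast; ring
      rw [h2]
      refine (Padic.nonarchimedean _ _).trans ?_
      rw [norm_sub_rev (i : ℚ_[p]) x]
      rw [zpow_neg, zpow_natCast, ← inv_pow]
      exact max_le (hx'.le.trans hk2) (hx.le.trans hk2)
    rw [Padic.norm_int_le_pow_iff_dvd] at h1
    have h3 : (i : ℤ) - j = 0 := by
      refine Int.eq_zero_of_abs_lt_dvd h1 ?_
      rw [abs_lt]
      have hi' : (i : ℤ) < (p : ℤ) ^ k := by exact_mod_cast hi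
      have hj' : (j : ℤ) < (p : ℤ) ^ k := by exact_mod_cast hj
      constructor <;> omega
    omega
  have hsub : (⋃ i ∈ Finset.range (p ^ k), Metric.ball (i : ℚ_[p]) r) ⊆
      Metric.closedBall 0 1 := by
    intro x hx
    simp only [Set.mem_iUnion, Metric.mem_ball, dist_eq_norm] at hx
    obtain ⟨i, -, hx⟩ := hx
    rw [mem_closedBall_zero_iff]
    have h2 : x = (x - i) + ((i : ℤ) : ℚ_[p]) := by push_cast; ring
    rw [h2]
    exact (Padic.nonarchimedean _ _).trans
      (max_le (hx.le.trans hr1) (Padic.norm_int_le_one _))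
  have hmain : (p ^ k : ℕ) * μ (Metric.ball 0 r) ≤ μ (Metric.closedBall 0 1) := by
    refine le_trans ?_ (measure_mono hsub)
    rw [measure_biUnion_finset hdisj (fun _ _ => measurableSet_ball)]
    simp [htrans]
  have hone : (1 : ENNReal) ≤ ENNReal.ofReal (p * r) * (p ^ k : ℕ) := by
    rw [← ENNReal.ofReal_natCast, ← ENNReal.ofReal_mul (by positivity), ENNReal.one_le_ofReal]
    push_cast
    rw [inv_pow, inv_lt_iff_one_lt_mul₀ (by positivity)] at hk1
    rw [pow_succ] at hk1
    nlinarith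
  calc μ (Metric.ball a r) = 1 * μ (Metric.ball 0 r) := by rw [htrans, one_mul]
    _ ≤ (ENNReal.ofReal (p * r) * (p ^ k : ℕ)) * μ (Metric.ball 0 r) := by gcongr
    _ = ENNReal.ofReal (p * r) * ((p ^ k : ℕ) * μ (Metric.ball 0 r)) := mul_assoc _ _ _
    _ ≤ _ := by gcongr

/-- The integer polynomials of degree at most `n` and height `h`: a coefficient vector is chosen by
fixing a position `i` that holds `±h` and letting the other entries range over `[-h, h]`. -/
noncomputable def polysOfHeight (n h : ℕ) : Finset (Polynomial ℤ) :=
  Finset.univ.biUnion fun i : Fin (n + 1) =>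
    (Fintype.piFinset fun j : Fin (n + 1) =>
      if j = i then ({(h : ℤ), -(h : ℤ)} : Finset ℤ) else Finset.Icc (-(h : ℤ)) h).image
      fun c => Polynomial.ofFn (n + 1) c

lemma card_polysOfHeight_le (n h : ℕ) :
    (polysOfHeight n h).card ≤ (n + 1) * (2 * (2 * h + 1) ^ n) := by
  have key : ∀ i ∈ (Finset.univ : Finset (Fin (n + 1))),
      ((Fintype.piFinset fun j : Fin (n + 1) =>
        if j = i then ({(h : ℤ), -(h : ℤ)} : Finset ℤ) else Finset.Icc (-(h : ℤ)) h).image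
        fun c => Polynomial.ofFn (n + 1) c).card ≤ 2 * (2 * h + 1) ^ n := by
    intro i hi
    refine Finset.card_image_le.trans ?_
    rw [Fintype.card_piFinset, ← Finset.mul_prod_erase _ _ hi]
    refine Nat.mul_le_mul ?_ (le_of_eq ?_)
    · simpa using Finset.card_le_two
    · rw [Finset.prod_congr rfl (g := fun _ => 2 * h + 1)]
      · simp
      · intro j hj
        rw [if_neg (Finset.ne_of_mem_erase hj), Int.card_Icc]
        omega
  refine (Finset.card_biUnion_le_card_mul _ _ _ key).trans ?_
  simp

lemma natDegree_le_of_mem_polysOfHeight {n h : ℕ} {P : Polynomial ℤ}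
    (hP : P ∈ polysOfHeight n h) : P.natDegree ≤ n := by
  simp only [polysOfHeight, Finset.mem_biUnion, Finset.mem_image] at hP
  obtain ⟨i, -, c, -, rfl⟩ := hP
  exact Nat.lt_succ_iff.1 (Polynomial.ofFn_natDegree_lt (by omega) c)

lemma mem_polysOfHeight {P : Polynomial ℤ} (hP : P ≠ 0) :
    P ∈ polysOfHeight P.natDegree (polyHeight P) := by
  obtain ⟨i, hi, hieq⟩ := Finset.exists_mem_eq_sup P.support
    (Polynomial.support_nonempty.2 hP) (fun i => (P.coeff i).natAbs)
  have hle : ∀ j, (P.coeff j).natAbs ≤ polyHeight P := by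
    intro j
    by_cases hj : j ∈ P.support
    · exact Finset.le_sup (f := fun i => (P.coeff i).natAbs) hj
    · simp [Polynomial.notMem_support_iff.1 hj]
  have hilt : i < P.natDegree + 1 := Nat.lt_succ_iff.2 (Polynomial.le_natDegree_of_mem_supp i hi)
  have hieq' : polyHeight P = (P.coeff i).natAbs := hieq
  simp only [polysOfHeight, Finset.mem_biUnion, Finset.mem_image, Fintype.mem_piFinset]
  refine ⟨⟨i, hilt⟩, Finset.mem_univ _, fun j => P.coeff j, fun j => ?_, ?_⟩
  · split_ifs with hj
    · subst hj
      simp only [Finset.mem_insert, Finset.mem_singleton]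
      omega
    · have := hle j
      rw [Finset.mem_Icc]
      beta_reduce
      omega
  · ext j
    by_cases hj : j < P.natDegree + 1
    · rw [Polynomial.ofFn_coeff_eq_val_of_lt _ hj]
    · rw [Polynomial.ofFn_coeff_eq_zero_of_ge _ (not_lt.1 hj),
        Polynomial.coeff_eq_zero_of_natDegree_lt (by omega)]

open Classical in
/-- The `p`-adic roots of nonzero integer polynomials of degree at most `n` and height `h`. -/
noncomputable def rootsOfHeight (p : ℕ) [Fact p.Prime] (n h : ℕ) : Finset ℚ_[p] :=
  (polysOfHeight n h).biUnion fun P => (P.aroots ℚ_[p]).toFinset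

open Classical in
lemma card_rootsOfHeight_le (p : ℕ) [Fact p.Prime] (n h : ℕ) :
    (rootsOfHeight p n h).card ≤ (n + 1) * (2 * (2 * h + 1) ^ n) * n := by
  refine (Finset.card_biUnion_le_card_mul _ _ n fun P hP => ?_).trans
    (Nat.mul_le_mul_right _ (card_polysOfHeight_le n h))
  exact (Multiset.toFinset_card_le _).trans ((Polynomial.card_roots' _).trans
    (Polynomial.natDegree_map_le.trans (natDegree_le_of_mem_polysOfHeight hP)))

theorem stmt_3 (p : ℕ) [Fact p.Prime] (n : ℕ) (hn : 1 ≤ n)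
    (Ψ : ℕ → ℝ) (hpos : ∀ h, 0 < Ψ h)
    (hmono : ∀ k l : ℕ, k ≤ l → Ψ l ≤ Ψ k)
    (hsum : Summable Ψ)
    [MeasurableSpace ℚ_[p]] [BorelSpace ℚ_[p]]
    (μ : Measure ℚ_[p]) [μ.IsAddHaarMeasure] :
    μ {ω : ℚ_[p] |
        {α : ℚ_[p] | ∃ P : Polynomial ℤ, P.natDegree = n ∧ Irreducible P ∧
          Polynomial.aeval α P = 0 ∧
          ‖ω - α‖ < (polyHeight P : ℝ) ^ (-(n : ℤ)) * Ψ (polyHeight P)}.Infinite} = 0 := by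
  classical
  let r : ℕ → ℝ := fun h => (h : ℝ) ^ (-(n : ℤ)) * Ψ h
  let E : ℕ → Set ℚ_[p] := fun h => ⋃ α ∈ rootsOfHeight p n h, Metric.ball α (r h)
  -- Beyond `h₀` the radius `r h` is at most `1`, as the bound on the measure of balls requires.
  obtain ⟨h₀, hh₀⟩ : ∃ h₀ : ℕ, ∀ h ≥ h₀, 1 ≤ h ∧ Ψ h ≤ 1 := by
    have h1 := hsum.tendsto_atTop_zero.eventually (eventually_le_nhds (zero_lt_one' ℝ))
    exact Filter.eventually_atTop.1 ((Filter.eventually_ge_atTop 1).and h1)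
  let C : ℝ := (n + 1) * (2 * 3 ^ n) * n * p
  have hE : ∀ h ≥ h₀, μ (E h) ≤ ENNReal.ofReal (C * Ψ h) * μ (Metric.closedBall 0 1) := by
    intro h hh
    obtain ⟨h1, hΨ1⟩ := hh₀ h hh
    have h1' : (1 : ℝ) ≤ h := by exact_mod_cast h1
    have hh0 : (0 : ℝ) < h := by linarith
    have hΨ := hpos h
    have hr0 : 0 < r h := by positivity
    have hr1 : r h ≤ 1 := by
      refine mul_le_one₀ ?_ hΨ.le hΨ1
      rw [zpow_neg, zpow_natCast]
      exact inv_le_one_of_one_le₀ (one_le_pow₀ h1')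
    have hcard : ((rootsOfHeight p n h).card : ℝ) * (p * r h) ≤ C * Ψ h := by
      have hc : ((rootsOfHeight p n h).card : ℝ) ≤ (n + 1) * (2 * (3 ^ n * h ^ n)) * n := by
        calc ((rootsOfHeight p n h).card : ℝ)
            ≤ (n + 1) * (2 * (2 * h + 1) ^ n) * n := by
              exact_mod_cast card_rootsOfHeight_le p n h
          _ ≤ (n + 1) * (2 * (3 * h) ^ n) * n := by gcongr; linarith
          _ = _ := by rw [mul_pow]
      calc ((rootsOfHeight p n h).card : ℝ) * (p * r h)
          ≤ (n + 1) * (2 * (3 ^ n * h ^ n)) * n * (p * r h) := by gcongr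
        _ = C * Ψ h := by
          simp only [r, C, zpow_neg, zpow_natCast]
          field_simp
    calc μ (E h) ≤ ∑ α ∈ rootsOfHeight p n h, μ (Metric.ball α (r h)) :=
          measure_biUnion_finset_le _ _
      _ ≤ ∑ α ∈ rootsOfHeight p n h,
            ENNReal.ofReal (p * r h) * μ (Metric.closedBall 0 1) :=
          Finset.sum_le_sum fun α _ => measure_ball_le p μ α hr0 hr1
      _ = ENNReal.ofReal ((rootsOfHeight p n h).card * (p * r h)) *
            μ (Metric.closedBall 0 1) := by
          rw [Finset.sum_const, nsmul_eq_mul, ENNReal.ofReal_mul (Nat.cast_nonneg (Finset.card _)),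
            ENNReal.ofReal_natCast, mul_assoc]
      _ ≤ _ := by gcongr
  have htsum : ∑' h, μ (E (h + h₀)) ≠ ⊤ := by
    refine ne_top_of_le_ne_top ?_ (ENNReal.tsum_le_tsum fun h => hE (h + h₀) (by omega))
    rw [ENNReal.tsum_mul_right]
    refine ENNReal.mul_ne_top ?_ (isCompact_closedBall _ _).measure_lt_top.ne
    exact (((summable_nat_add_iff h₀).2 hsum).mul_left C).tsum_ofReal_ne_top
  have hae := ae_eventually_notMem htsum
  refine measure_mono_null (fun ω hω => ?_) hae
  simp only [Set.mem_compl_iff, Set.mem_ofPred_eq] at hω ⊢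
  intro hev
  obtain ⟨N, hN⟩ := Filter.eventually_atTop.1 hev
  refine hω (Set.Finite.subset
    ((Finset.range (N + h₀)).biUnion fun h => rootsOfHeight p n h).finite_toSet ?_)
  rintro α ⟨P, hdeg, hirr, hα, hlt⟩
  have hmem : α ∈ rootsOfHeight p n (polyHeight P) := by
    refine Finset.mem_biUnion.2 ⟨P, hdeg ▸ mem_polysOfHeight hirr.ne_zero, ?_⟩
    rw [Multiset.mem_toFinset, Polynomial.mem_aroots]
    exact ⟨hirr.ne_zero, hα⟩
  refine Finset.mem_coe.2 (Finset.mem_biUnion.2 ⟨polyHeight P, ?_, hmem⟩)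
  rw [Finset.mem_range]
  by_contra! hge
  refine hN (polyHeight P - h₀) (by omega) ?_
  rw [Nat.sub_add_cancel (by omega)]
  refine Set.mem_biUnion hmem ?_
  rw [Metric.mem_ball, dist_eq_norm]
  exact hlt
end

section
/- Let p be a prime and n ≥ 1. The pair (𝔸_{p,n}, N) with N(α) = H(α)^{n+1} is a regular system in any finite disc K₀ ⊂ ℚ_p: there is a constant C > 0 such that for every disc K ⊆ K₀ and all sufficiently large T there exist α₁, …, α_t ∈ 𝔸_{p,n} ∩ K with H(α_i)^{n+1} ≤ T, |α_i − α_j|_p ≥ T^{-1} for i ≠ j, and t ≥ C·T·μ(K). -/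
/-!
Work in `ℤ_p` after scaling by a power of `p`. For `x ∈ ℤ_p` let `Λ_x` be the lattice of integer
polynomials `P` of degree at most `n` with `|P(x)|_p ≤ p^{-(n+1)M}`; its covolume is `p^{(n+1)M}`.

For most points `x` of a ball, `Λ_x` has no nonzero vector much shorter than `p^M`. This is a
nondivergence argument in the style of Kleinbock and Margulis. For each rational subspace `V` the
covolume `phi` of `V ∩ Λ_x`, as a function of `x`, is controlled by the absolute value of a
polynomial, so it is rarely much smaller than on the ball as a whole (`polynomial_good`,
`phi_good`). An induction over flags of subspaces (`measure_not_marked_le`) shows that most points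
have a flag of subspaces that excludes short vectors (`measure_short_le`).

At such a good point the pigeonhole principle gives `n + 1` independent vectors of `Λ_x` of length
`O(p^M)` (`exists_lattice_basis`). Their determinant is a bounded multiple of the covolume. Hence one
of them has derivative at `x` bounded below, and the index of their span is prime to any large
auxiliary prime `q ≠ p`. A combination with bounded coefficients is therefore congruent to `X^n + q`
modulo `q^2` and still has large derivative (`exists_eisenstein_vector`). By Eisenstein's criterion
its primitive part is irreducible of degree `n`, and by Hensel's lemma it has a root within
`O(p^{-(n+1)M})` of `x`, of height `O(p^M)` (`exists_algebraic_near`).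

So the algebraic numbers of degree `n` and height `O(p^M)` come within `O(p^{-(n+1)M})` of more than
half of every ball once `M` is large, and a volume count extracts a separated family of the required
size (`exists_separated`). For a given `T`, `M` is chosen with `p^{(n+1)M}` comparable to `T`.
-/

open MeasureTheory

variable (p : ℕ) [Fact p.Prime]

/-- A disc in `ℚ_[p]`. -/
def IsPadicDisc (K : Set ℚ_[p]) : Prop :=
  ∃ (a : ℚ_[p]) (r : ℝ), 0 < r ∧ K = {x | ‖x - a‖ < r}

/-- `(Γ, N)` is a regular system of points in `K₀` (w.r.t. the Haar measure `μ`):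
there is `C > 0` such that for every disc `K ⊆ K₀` and all sufficiently large `T`
there are points `γ₁, …, γ_t ∈ Γ ∩ K` with `N(γᵢ) ≤ T`, pairwise distances at least
`T⁻¹`, and `t ≥ C·T·μ(K)`. -/
def IsRegularSystem [MeasurableSpace ℚ_[p]] (μ : Measure ℚ_[p]) (K₀ : Set ℚ_[p])
    (Γ : Set ℚ_[p]) (N : ℚ_[p] → ℝ) : Prop :=
  ∃ C : ℝ, 0 < C ∧ ∀ K : Set ℚ_[p], K ⊆ K₀ → IsPadicDisc p K →
    ∃ T₀ : ℝ, ∀ T : ℝ, T₀ ≤ T →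
      ∃ (t : ℕ) (γ : Fin t → ℚ_[p]),
        (∀ i, γ i ∈ Γ ∩ K) ∧ (∀ i, N (γ i) ≤ T) ∧
        (∀ i j, i ≠ j → T⁻¹ ≤ ‖γ i - γ j‖) ∧
        C * T * (μ K).toReal ≤ (t : ℝ)

/-- `α ∈ ℚ_[p]` is algebraic of degree `n`. -/
def IsAlgOfDeg (n : ℕ) (α : ℚ_[p]) : Prop :=
  ∃ P : Polynomial ℤ, P.natDegree = n ∧ Irreducible P ∧ Polynomial.aeval α P = 0

/-! ### Balls in `ℚ_[p]` -/

/-- The closed ball `{x : |x - a|_p ≤ p^{-k}}`. -/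
def cball (a : ℚ_[p]) (k : ℤ) : Set ℚ_[p] := {x | ‖x - a‖ ≤ (p : ℝ) ^ (-k)}

lemma mem_cball {a x : ℚ_[p]} {k : ℤ} : x ∈ cball p a k ↔ ‖x - a‖ ≤ (p : ℝ) ^ (-k) := Iff.rfl

lemma one_lt_p : (1 : ℝ) < p := by exact_mod_cast (Fact.out : p.Prime).one_lt

lemma p_pos : (0 : ℝ) < p := by exact_mod_cast (Fact.out : p.Prime).pos

lemma mem_cball_self (a : ℚ_[p]) (k : ℤ) : a ∈ cball p a k := by
  simp only [mem_cball, sub_self, norm_zero]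
  exact (zpow_pos (p_pos p) _).le

lemma norm_sub_le_ultra {a b c : ℚ_[p]} {r : ℝ} (h : ‖a - b‖ ≤ r) (h' : ‖b - c‖ ≤ r) :
    ‖a - c‖ ≤ r := by
  have := Padic.nonarchimedean (a - b) (b - c)
  rw [sub_add_sub_cancel] at this
  exact this.trans (max_le h h')

lemma cball_eq {a b : ℚ_[p]} {k : ℤ} (h : b ∈ cball p a k) : cball p b k = cball p a k := by
  ext x
  simp only [mem_cball] at *
  constructor
  · intro hx
    exact norm_sub_le_ultra p hx h
  · intro hx
    rw [norm_sub_rev] at h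
    exact norm_sub_le_ultra p hx h

lemma cball_mono (a : ℚ_[p]) {k l : ℤ} (h : k ≤ l) : cball p a l ⊆ cball p a k := by
  intro x hx
  simp only [mem_cball] at *
  exact hx.trans (zpow_le_zpow_right₀ (one_lt_p p).le (by omega))

lemma cball_eq_closedBall (a : ℚ_[p]) (k : ℤ) :
    cball p a k = Metric.closedBall a ((p : ℝ) ^ (-k)) := by
  ext x; simp [mem_cball, dist_eq_norm]

lemma isOpen_cball (a : ℚ_[p]) (k : ℤ) : IsOpen (cball p a k) := by
  rw [cball_eq_closedBall]
  exact IsUltrametricDist.isOpen_closedBall _ (zpow_pos (p_pos p) _).ne.symm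

/-- Every disc is a closed ball whose radius is a power of `p`. -/
lemma disc_eq_cball {K : Set ℚ_[p]} (hK : IsPadicDisc p K) : ∃ a k, K = cball p a k := by
  obtain ⟨a, r, hr, rfl⟩ := hK
  obtain ⟨k, hk1, hk2⟩ := exists_mem_Ioc_zpow hr (one_lt_p p)
  refine ⟨a, -k, ?_⟩
  ext x
  simp only [mem_cball, neg_neg]
  constructor
  · intro hx
    rw [Padic.norm_le_pow_iff_norm_lt_pow_add_one]
    exact hx.trans_le hk2
  · intro hx
    exact hx.trans_lt hk1

set_option linter.unusedSectionVars false

section Measure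

variable [MeasurableSpace ℚ_[p]] [BorelSpace ℚ_[p]] (μ : Measure ℚ_[p]) [μ.IsAddHaarMeasure]

lemma measurableSet_cball (a : ℚ_[p]) (k : ℤ) : MeasurableSet (cball p a k) :=
  (isOpen_cball p a k).measurableSet

lemma measure_cball_zero (a : ℚ_[p]) (k : ℤ) : μ (cball p a k) = μ (cball p 0 k) := by
  have : cball p 0 k = (fun x => x + a) ⁻¹' (cball p a k) := by
    ext x; simp [mem_cball]
  rw [this, measure_preimage_add_right]

lemma measure_cball_lt_top (a : ℚ_[p]) (k : ℤ) : μ (cball p a k) < ⊤ := by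
  rw [cball_eq_closedBall]
  exact (isCompact_closedBall _ _).measure_lt_top

lemma measure_cball_pos (a : ℚ_[p]) (k : ℤ) : 0 < μ (cball p a k) :=
  (isOpen_cball p a k).measure_pos μ ⟨a, mem_cball_self p a k⟩

lemma measure_cball_succ (a : ℚ_[p]) (k : ℤ) :
    μ (cball p a k) = p * μ (cball p a (k + 1)) := by
  rw [measure_cball_zero p μ a k, measure_cball_zero p μ a (k + 1)]
  have hp0 : (p : ℚ_[p]) ≠ 0 := by exact_mod_cast (Fact.out : p.Prime).ne_zero
  -- the ball of radius `p^{-k}` is the disjoint union of the translates by `i p^k`, `i < p`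
  have hU : cball p 0 k = ⋃ i ∈ Finset.range p, cball p ((i : ℚ_[p]) * (p : ℚ_[p]) ^ k) (k + 1) := by
    ext x
    simp only [Set.mem_iUnion, Finset.mem_range, exists_prop]
    constructor
    · intro hx
      simp only [mem_cball, sub_zero] at hx
      have hy : ‖x * (p : ℚ_[p]) ^ (-k)‖ ≤ 1 := by
        rw [norm_mul, Padic.norm_p_zpow, neg_neg]
        calc ‖x‖ * (p : ℝ) ^ k ≤ (p : ℝ) ^ (-k) * (p : ℝ) ^ k :=
              mul_le_mul_of_nonneg_right hx (zpow_pos (p_pos p) _).le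
          _ = 1 := by rw [← zpow_add₀ (p_pos p).ne']; simp
      obtain ⟨i, hi, hi'⟩ := PadicInt.exists_mem_range (⟨_, hy⟩ : ℤ_[p])
      refine ⟨i, hi, ?_⟩
      rw [IsLocalRing.mem_maximalIdeal, PadicInt.mem_nonunits] at hi'
      have h2 : ‖x * (p : ℚ_[p]) ^ (-k) - i‖ < 1 := by
        rw [PadicInt.norm_def] at hi'
        exact_mod_cast hi'
      have h3 : ‖x * (p : ℚ_[p]) ^ (-k) - i‖ ≤ (p : ℝ) ^ (-1 : ℤ) := by
        rw [Padic.norm_le_pow_iff_norm_lt_pow_add_one]; simpa using h2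
      have h4 : x - i * (p : ℚ_[p]) ^ k = (x * (p : ℚ_[p]) ^ (-k) - i) * (p : ℚ_[p]) ^ k := by
        rw [sub_mul, mul_assoc, ← zpow_add₀ hp0]; simp
      simp only [mem_cball]
      rw [h4, norm_mul, Padic.norm_p_zpow]
      calc _ ≤ (p : ℝ) ^ (-1 : ℤ) * (p : ℝ) ^ (-k) :=
            mul_le_mul_of_nonneg_right h3 (zpow_pos (p_pos p) _).le
        _ = _ := by rw [← zpow_add₀ (p_pos p).ne']; congr 1; ring
    · rintro ⟨i, hi, hx⟩
      have hx' := cball_mono p _ (show k ≤ k + 1 by omega) hx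
      have : ((i : ℚ_[p]) * (p : ℚ_[p]) ^ k) ∈ cball p 0 k := by
        simp only [mem_cball, sub_zero, norm_mul, Padic.norm_p_zpow]
        have : ‖(i : ℚ_[p])‖ ≤ 1 := by exact_mod_cast Padic.norm_int_le_one (i : ℤ)
        exact mul_le_of_le_one_left (zpow_pos (p_pos p) _).le this
      rwa [← cball_eq p this]
  rw [hU, measure_biUnion_finset]
  · simp_rw [measure_cball_zero p μ _ (k + 1)]
    simp
  · intro i hi j hj hij
    rw [Function.onFun, Set.disjoint_left]
    intro x hxi hxj
    have h1 := cball_eq p hxi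
    have h2 := mem_cball_self p ((i : ℚ_[p]) * (p : ℚ_[p]) ^ k) (k + 1)
    rw [← h1, cball_eq p hxj] at h2
    simp only [mem_cball, ← sub_mul, norm_mul, Padic.norm_p_zpow] at h2
    rw [show -(k + 1) = -1 + -k by ring, zpow_add₀ (p_pos p).ne'] at h2
    have h3 := le_of_mul_le_mul_right h2 (zpow_pos (p_pos p) _)
    rw [Padic.norm_le_pow_iff_norm_lt_pow_add_one] at h3
    have h4 : ‖(((i : ℤ) - (j : ℤ) : ℤ) : ℚ_[p])‖ < 1 := by simpa using h3
    rw [Padic.norm_intCast_lt_one_iff] at h4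
    simp only [Finset.coe_range, Set.mem_Iio] at hi hj
    have := Int.eq_zero_of_abs_lt_dvd h4 (by rw [abs_lt]; omega)
    omega
  · intro i _
    exact measurableSet_cball p _ _

lemma measure_cball_add (a b : ℚ_[p]) (k : ℤ) (e : ℕ) :
    μ (cball p a k) = (p : ENNReal) ^ e * μ (cball p b (k + e)) := by
  rw [measure_cball_zero p μ b]
  induction e with
  | zero => simp [measure_cball_zero p μ a]
  | succ e ih =>
    rw [ih, measure_cball_succ p μ 0 (k + e), ← mul_assoc, pow_succ]
    push_cast
    rw [add_assoc]

end Measure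

/-! ### Separated points, and goodness of polynomials on balls -/

/-- Greedy choice: a set either contains `N` points no two of which lie in a common ball of
radius `p^{-l}`, or is covered by fewer than `N` such balls. -/
lemma separated_or_covered (E : Set ℚ_[p]) (l : ℤ) (N : ℕ) :
    (∃ s : Finset ℚ_[p], s.card = N ∧ (s : Set ℚ_[p]) ⊆ E ∧
      ∀ x ∈ s, ∀ y ∈ s, x ≠ y → y ∉ cball p x l) ∨
    (∃ s : Finset ℚ_[p], s.card < N ∧ E ⊆ ⋃ a ∈ s, cball p a l) := by
  classical
  induction N with
  | zero => exact Or.inl ⟨∅, by simp⟩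
  | succ N ih =>
    rcases ih with ⟨s, hs, hsE, hsep⟩ | ⟨s, hs, hcov⟩
    · by_cases hcov : E ⊆ ⋃ a ∈ s, cball p a l
      · exact Or.inr ⟨s, by omega, hcov⟩
      · obtain ⟨z, hz, hz'⟩ := Set.not_subset.1 hcov
        simp only [Set.mem_iUnion, not_exists] at hz'
        have hzs : z ∉ s := fun h => hz' z h (mem_cball_self p z l)
        refine Or.inl ⟨insert z s, by rw [Finset.card_insert_of_notMem hzs, hs], ?_, ?_⟩
        · rw [Finset.coe_insert]
          exact Set.insert_subset hz hsE
        · intro x hx y hy hxy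
          rcases Finset.mem_insert.1 hx with rfl | hxs
          · rcases Finset.mem_insert.1 hy with rfl | hys
            · exact absurd rfl hxy
            · intro h
              refine hz' y hys ?_
              rw [cball_eq p h]
              exact mem_cball_self p _ l
          · rcases Finset.mem_insert.1 hy with rfl | hys
            · exact hz' x hxs
            · exact hsep x hxs y hys hxy
    · exact Or.inr ⟨s, by omega, hcov⟩

open Polynomial in
/-- Polynomials of degree at most `n` are `(C, 1/n)`-good on `p`-adic balls: a polynomial is much
smaller than its maximum only on a small portion of a ball. Lagrange interpolation bounds the
polynomial everywhere by its values at `n + 1` well-spaced points, so the set in question is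
covered by `n` balls of radius `p^{-(k+e)}`. -/
lemma polynomial_good [MeasurableSpace ℚ_[p]] [BorelSpace ℚ_[p]] (μ : Measure ℚ_[p])
    [μ.IsAddHaarMeasure] (n : ℕ) (f : ℚ_[p][X]) (hf : f.degree < (n + 1 : ℕ))
    (a : ℚ_[p]) (k : ℤ) (e : ℕ) (y : ℚ_[p]) (hy : y ∈ cball p a k) :
    (p : ENNReal) ^ e * μ {x ∈ cball p a k | (p : ℝ) ^ (e * n) * ‖f.eval x‖ < ‖f.eval y‖} ≤
      n * μ (cball p a k) := by
  classical
  set E := {x ∈ cball p a k | (p : ℝ) ^ (e * n) * ‖f.eval x‖ < ‖f.eval y‖} with hE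
  rcases separated_or_covered p E (k + e) (n + 1) with ⟨s, hs, hsE, hsep⟩ | ⟨s, hs, hcov⟩
  · exfalso
    have hinj : Set.InjOn (id : ℚ_[p] → ℚ_[p]) s := fun _ _ _ _ h => h
    have hint := Lagrange.eq_interpolate hinj (by rw [hs]; exact hf)
    have hne : s.Nonempty := by rw [← Finset.card_pos]; omega
    obtain ⟨i, hi, hle⟩ := IsUltrametricDist.exists_norm_finsetSum_le_of_nonempty hne
      (fun i => f.eval i * (Lagrange.basis s id i).eval y)
    have hsum : f.eval y = ∑ i ∈ s, f.eval i * (Lagrange.basis s id i).eval y := by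
      conv_lhs => rw [hint]
      simp [Lagrange.interpolate_apply, eval_finsetSum]
    rw [← hsum, norm_mul] at hle
    have hbasis : ‖(Lagrange.basis s id i).eval y‖ ≤ (p : ℝ) ^ (e * n) := by
      rw [Lagrange.basis, eval_prod, norm_prod]
      calc _ ≤ ∏ j ∈ s.erase i, (p : ℝ) ^ e := by
            refine Finset.prod_le_prod (fun _ _ => norm_nonneg _) fun j hj => ?_
            have hji := Finset.ne_of_mem_erase hj
            have hjs := Finset.mem_of_mem_erase hj
            have h1 := hsep j hjs i hi hji
            rw [mem_cball, not_le] at h1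
            have h2 : ‖y - j‖ ≤ (p : ℝ) ^ (-k) := by
              have := (hsE hjs).1
              rw [← cball_eq p this] at hy
              exact hy
            simp only [Lagrange.basisDivisor, id, eval_mul, eval_C, eval_sub, eval_X, norm_mul,
              norm_inv]
            rw [inv_mul_le_iff₀ ((zpow_pos (p_pos p) _).trans h1)]
            calc _ ≤ _ := h2
              _ = (p : ℝ) ^ (-(k + e)) * (p : ℝ) ^ e := by
                rw [← zpow_natCast, ← zpow_add₀ (p_pos p).ne']; congr 1; ring
              _ ≤ _ := mul_le_mul_of_nonneg_right h1.le (pow_pos (p_pos p) _).le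
        _ = _ := by
          rw [Finset.prod_const, Finset.card_erase_of_mem hi, hs, ← pow_mul]; simp
    have h3 := (hsE hi).2
    have h4 := mul_le_mul_of_nonneg_left hbasis (norm_nonneg (f.eval i))
    linarith
  · calc _ ≤ (p : ENNReal) ^ e * ∑ b ∈ s, μ (cball p b (k + e)) := by
          gcongr
          exact (measure_mono hcov).trans (measure_biUnion_finset_le _ _)
      _ = s.card * μ (cball p a k) := by
          simp_rw [measure_cball_zero p μ _ (k + e), measure_cball_add p μ a 0 k e]
          simp only [Finset.sum_const, nsmul_eq_mul]
          ring
      _ ≤ _ := by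
          gcongr
          omega

/-! ### Quantitative nondivergence -/

/-- For a family of functions `φ V` indexed by an ordered set, `x` is marked if there is a flag `F`
on which every `φ V x` lies in `[ε, 1)`, while `1 ≤ φ V x` for every other nonzero index `V`
comparable with the whole flag. -/
def Marked {ι X : Type*} [PartialOrder ι] [OrderBot ι] (φ : ι → X → ℝ) (ε : ℝ) (x : X) : Prop :=
  ∃ F : Finset ι, (∀ U ∈ F, ∀ V ∈ F, U ≤ V ∨ V ≤ U) ∧ ⊥ ∉ F ∧
    (∀ V ∈ F, ε ≤ φ V x ∧ φ V x < 1) ∧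
    ∀ V, V ≠ ⊥ → V ∉ F → (∀ U ∈ F, V ≤ U ∨ U ≤ V) → 1 ≤ φ V x

/-- Quantitative nondivergence: if every `φ V` is good on balls and reaches `1` near a ball, then
most points of the ball are marked. The induction is on the number `j` of elements that can still
be added to a flag `F` along which all functions are already `< 1` on the ball. Around each point at
which some further `φ V` is `< 1`, take the largest ball on which such a `V` stays `< 1`; these
balls are disjoint, on the parent of each of them all remaining functions reach `1`, and `V` is
added to the flag. -/
lemma measure_not_marked_le [MeasurableSpace ℚ_[p]] [BorelSpace ℚ_[p]] (μ : Measure ℚ_[p])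
    [μ.IsAddHaarMeasure] {ι : Type*} [PartialOrder ι] [OrderBot ι] (φ : ι → ℚ_[p] → ℝ) (ε : ℝ)
    (c : ENNReal) (d : ℕ)
    (hchain : ∀ F : Finset ι, (∀ U ∈ F, ∀ V ∈ F, U ≤ V ∨ V ≤ U) → ⊥ ∉ F → F.card ≤ d)
    (hcont : ∀ V x, φ V x < 1 → ∃ l : ℤ, ∀ y ∈ cball p x l, φ V y < 1)
    (hgood : ∀ V a k, (∃ y ∈ cball p a k, 1 ≤ φ V y) →
      μ {x ∈ cball p a k | φ V x < ε} ≤ c * μ (cball p a k)) :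
    ∀ (j : ℕ) (F : Finset ι) (a : ℚ_[p]) (k : ℤ), (∀ U ∈ F, ∀ V ∈ F, U ≤ V ∨ V ≤ U) → ⊥ ∉ F →
      d ≤ F.card + j → (∀ V ∈ F, ∀ y ∈ cball p a k, φ V y < 1) →
      (∀ V, V ≠ ⊥ → V ∉ F → (∀ U ∈ F, V ≤ U ∨ U ≤ V) → ∃ y ∈ cball p a (k - 1), 1 ≤ φ V y) →
      μ {x ∈ cball p a k | (∀ V ∈ F, ε ≤ φ V x) ∧ ¬ Marked φ ε x} ≤
        j * (c * p) * μ (cball p a k) := by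
  classical
  intro j
  induction j with
  | zero =>
    intro F a k hF hbot hd hlt hge
    have : {x ∈ cball p a k | (∀ V ∈ F, ε ≤ φ V x) ∧ ¬ Marked φ ε x} = ∅ := by
      ext x
      simp only [Set.mem_ofPred_eq, Set.mem_empty_iff_false, iff_false]
      rintro ⟨hx, hx1, hx2⟩
      refine hx2 ⟨F, hF, hbot, fun V hV => ⟨hx1 V hV, hlt V hV x hx⟩, fun V hV hVF hVc => ?_⟩
      have := hchain (insert V F) ?_ ?_
      · rw [Finset.card_insert_of_notMem hVF] at this
        omega
      · intro U hU W hW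
        rcases Finset.mem_insert.1 hU with rfl | hU'
        · rcases Finset.mem_insert.1 hW with rfl | hW'
          · exact Or.inl le_rfl
          · exact hVc W hW'
        · rcases Finset.mem_insert.1 hW with rfl | hW'
          · exact (hVc U hU').symm
          · exact hF U hU' W hW'
      · simp only [Finset.mem_insert, not_or]
        exact ⟨hV.symm, hbot⟩
    rw [this]
    simp
  | succ j ih =>
    intro F a k hF hbot hd hlt hge
    set Bad := {x ∈ cball p a k | (∀ V ∈ F, ε ≤ φ V x) ∧ ¬ Marked φ ε x} with hBad
    let S : ι → Prop := fun V => V ≠ ⊥ ∧ V ∉ F ∧ ∀ U ∈ F, V ≤ U ∨ U ≤ V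
    let fail : ℚ_[p] → ℕ → Prop := fun x t => ∃ V, S V ∧ ∀ y ∈ cball p x (k + t), φ V y < 1
    have hex : ∀ x ∈ Bad, ∃ t, fail x t ∧ ∀ t' < t, ¬ fail x t' := by
      rintro x ⟨hx, hx1, hx2⟩
      have : ∃ t, fail x t := by
        by_contra! hcon
        refine hx2 ⟨F, hF, hbot, fun V hV => ⟨hx1 V hV, hlt V hV x hx⟩, fun V hV hVF hVc => ?_⟩
        by_contra! hφ
        obtain ⟨l, hl⟩ := hcont V x hφ
        refine hcon (l - k).toNat ⟨V, ⟨hV, hVF, hVc⟩, fun y hy => hl y ?_⟩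
        exact cball_mono p x (by omega) hy
      exact ⟨Nat.find this, Nat.find_spec this, fun t' ht' => Nat.find_min this ht'⟩
    choose! t ht hmin using hex
    have hball : ∀ x ∈ Bad,
        μ (Bad ∩ cball p x (k + t x)) ≤ (j + 1 : ℕ) * (c * p) * μ (cball p x (k + t x)) := by
      intro x hx
      obtain ⟨V, ⟨hV, hVF, hVc⟩, hVlt⟩ := ht x hx
      have hparent : ∀ U, S U → ∃ y ∈ cball p x (k + t x - 1), 1 ≤ φ U y := by
        intro U hU
        rcases Nat.eq_zero_or_pos (t x) with h0 | h0
        · obtain ⟨y, hy, hy'⟩ := hge U hU.1 hU.2.1 hU.2.2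
          refine ⟨y, ?_, hy'⟩
          rw [h0, Nat.cast_zero, add_zero, cball_eq p (cball_mono p a (by omega) hx.1)]
          exact hy
        · have h1 := hmin x hx (t x - 1) (by omega)
          by_contra! hcon
          refine h1 ⟨U, hU, fun y hy => hcon y ?_⟩
          rwa [show k + (t x : ℤ) - 1 = k + ((t x - 1 : ℕ) : ℤ) by omega]
      have h1 := ih (insert V F) x (k + t x) ?_ ?_ ?_ ?_ ?_
      · have h2 : μ {y ∈ cball p x (k + t x) | φ V y < ε} ≤ (c * p) * μ (cball p x (k + t x)) := by
          calc _ ≤ μ {y ∈ cball p x (k + t x - 1) | φ V y < ε} :=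
                measure_mono fun y hy => ⟨cball_mono p x (by omega) hy.1, hy.2⟩
            _ ≤ c * μ (cball p x (k + t x - 1)) := hgood V x _ (hparent V ⟨hV, hVF, hVc⟩)
            _ = _ := by
              rw [measure_cball_succ p μ x (k + t x - 1), sub_add_cancel, mul_assoc]
        calc _ ≤ μ ({y ∈ cball p x (k + t x) | (∀ U ∈ insert V F, ε ≤ φ U y) ∧ ¬ Marked φ ε y} ∪
                {y ∈ cball p x (k + t x) | φ V y < ε}) := by
              refine measure_mono ?_
              rintro y ⟨hy1, hy2⟩
              by_cases hy3 : φ V y < ε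
              · exact Or.inr ⟨hy2, hy3⟩
              · refine Or.inl ⟨hy2, fun U hU => ?_, hy1.2.2⟩
                rcases Finset.mem_insert.1 hU with rfl | hU
                · exact not_lt.1 hy3
                · exact hy1.2.1 U hU
          _ ≤ _ := measure_union_le _ _
          _ ≤ _ := add_le_add h1 h2
          _ = _ := by push_cast; ring
      · intro U hU W hW
        rcases Finset.mem_insert.1 hU with rfl | hU'
        · rcases Finset.mem_insert.1 hW with rfl | hW'
          · exact Or.inl le_rfl
          · exact hVc W hW'
        · rcases Finset.mem_insert.1 hW with rfl | hW'
          · exact (hVc U hU').symm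
          · exact hF U hU' W hW'
      · simp only [Finset.mem_insert, not_or]
        exact ⟨hV.symm, hbot⟩
      · rw [Finset.card_insert_of_notMem hVF]
        omega
      · intro U hU y hy
        rcases Finset.mem_insert.1 hU with rfl | hU
        · exact hVlt y hy
        · refine hlt U hU y ?_
          rw [← cball_eq p hx.1]
          exact cball_mono p x (by omega) hy
      · intro U hU hUF hUc
        rw [Finset.mem_insert, not_or] at hUF
        exact hparent U ⟨hU, hUF.2, fun W hW => hUc W (Finset.mem_insert_of_mem hW)⟩
    -- the maximal balls form a countable disjoint family covering the bad set
    set B : Set (Set ℚ_[p]) := (fun x => cball p x (k + t x)) '' Bad with hB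
    have hle : ∀ x ∈ Bad, ∀ y ∈ Bad, t x ≤ t y → ∀ z, z ∈ cball p x (k + t x) →
        z ∈ cball p y (k + t y) → cball p x (k + t x) = cball p y (k + t y) := by
      intro x hx y hy hxy z hzx hzy
      have h1 : cball p x (k + t x) = cball p y (k + t x) := by
        rw [← cball_eq p hzx, cball_eq p (cball_mono p y (by omega) hzy)]
      have h2 : t y ≤ t x := by
        by_contra! h
        obtain ⟨V, hV, hV'⟩ := ht x hx
        rw [h1] at hV'
        exact hmin y hy _ h ⟨V, hV, hV'⟩
      rw [h1, le_antisymm hxy h2]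
    have hdisj : B.PairwiseDisjoint id := by
      rintro _ ⟨x, hx, rfl⟩ _ ⟨y, hy, rfl⟩ hne
      rw [Function.onFun, Set.disjoint_left]
      intro z hzx hzy
      rcases le_total (t x) (t y) with h | h
      · exact hne (hle x hx y hy h z hzx hzy)
      · exact hne (hle y hy x hx h z hzy hzx).symm
    have hcount : B.Countable := by
      refine hdisj.countable_of_isOpen ?_ ?_
      · rintro _ ⟨x, hx, rfl⟩
        exact isOpen_cball p _ _
      · rintro _ ⟨x, hx, rfl⟩
        exact ⟨x, mem_cball_self p _ _⟩
    calc μ Bad ≤ μ (⋃ s ∈ B, Bad ∩ s) := by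
          refine measure_mono fun x hx => ?_
          simp only [Set.mem_iUnion, exists_prop]
          exact ⟨_, ⟨x, hx, rfl⟩, hx, mem_cball_self p _ _⟩
      _ ≤ ∑' s : B, μ (Bad ∩ s) := measure_biUnion_le μ hcount _
      _ ≤ ∑' s : B, (j + 1 : ℕ) * (c * p) * μ s := by
          refine ENNReal.tsum_le_tsum ?_
          rintro ⟨_, x, hx, rfl⟩
          exact hball x hx
      _ = (j + 1 : ℕ) * (c * p) * μ (⋃ s ∈ B, s) := by
          rw [ENNReal.tsum_mul_left]
          congr 1
          refine (measure_biUnion hcount hdisj ?_).symm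
          rintro _ ⟨x, hx, rfl⟩
          exact measurableSet_cball p _ _
      _ ≤ _ := by
          gcongr
          simp only [Set.iUnion_subset_iff]
          rintro _ ⟨x, hx, rfl⟩
          rw [← cball_eq p hx.1]
          exact cball_mono p x (by omega)

/-! ### Lattices of integer polynomials and their covolumes -/

/-- The inclusion `ℤ^d → ℚ^d`. -/
def castQ (d : ℕ) : (Fin d → ℤ) →ₗ[ℤ] (Fin d → ℚ) :=
  (Algebra.linearMap ℤ ℚ).compLeft (Fin d)

@[simp] lemma castQ_apply {d : ℕ} (v : Fin d → ℤ) (i : Fin d) : castQ d v i = (v i : ℚ) := rfl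

lemma castQ_injective (d : ℕ) : Function.Injective (castQ d) := by
  intro v w h
  ext i
  have := congrFun h i
  simpa using this

/-- The value at `x` of the integer polynomial with coefficient vector `v`. -/
noncomputable def evalv {d : ℕ} (x : ℚ_[p]) : (Fin d → ℤ) →ₗ[ℤ] ℚ_[p] :=
  Fintype.linearCombination ℤ (fun i : Fin d => x ^ (i : ℕ))

lemma evalv_apply {d : ℕ} (x : ℚ_[p]) (v : Fin d → ℤ) :
    evalv p x v = ∑ i, (v i : ℚ_[p]) * x ^ (i : ℕ) := by
  simp [evalv, Fintype.linearCombination_apply]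

/-- The sup norm of an integer vector. -/
def nrm {d : ℕ} (v : Fin d → ℤ) : ℕ := Finset.univ.sup fun i => (v i).natAbs

lemma natAbs_le_nrm {d : ℕ} (v : Fin d → ℤ) (i : Fin d) : (v i).natAbs ≤ nrm v :=
  Finset.le_sup (f := fun i => (v i).natAbs) (Finset.mem_univ i)

/-- The largest absolute value of a maximal minor of the matrix with rows `b i`. For a basis of a
lattice this plays the role of the covolume. -/
def minorHeight {j d : ℕ} (b : Fin j → Fin d → ℤ) : ℕ :=
  Finset.univ.sup fun e : Fin j → Fin d => (Matrix.of fun i k => b i (e k)).det.natAbs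

lemma natAbs_det_le_minorHeight {j d : ℕ} (b : Fin j → Fin d → ℤ) (e : Fin j → Fin d) :
    (Matrix.of fun i k => b i (e k)).det.natAbs ≤ minorHeight b :=
  Finset.le_sup (f := fun e : Fin j → Fin d => (Matrix.of fun i k => b i (e k)).det.natAbs)
    (Finset.mem_univ e)

/-- The lattice `V ∩ ℤ^d` has an integral basis, of cardinality `dim V`. -/
lemma exists_intBasis {d : ℕ} (V : Submodule ℚ (Fin d → ℚ)) :
    ∃ b : Fin (Module.finrank ℚ V) → Fin d → ℤ, LinearIndependent ℚ (fun i => castQ d (b i)) ∧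
      (∀ i, castQ d (b i) ∈ V) ∧
      ∀ w, castQ d w ∈ V → ∃ a : Fin (Module.finrank ℚ V) → ℤ, w = ∑ i, a i • b i := by
  let L : Submodule ℤ (Fin d → ℤ) := (V.restrictScalars ℤ).comap (castQ d)
  have key : ∃ r, ∃ b : Fin r → Fin d → ℤ, LinearIndependent ℚ (fun i => castQ d (b i)) ∧
      (∀ i, castQ d (b i) ∈ V) ∧ ∀ w, castQ d w ∈ V → ∃ a : Fin r → ℤ, w = ∑ i, a i • b i := by
    let B := Module.finBasis ℤ L
    refine ⟨_, fun i => (B i : Fin d → ℤ), ?_, fun i => (B i).2, fun w hw => ?_⟩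
    · rw [← LinearIndependent.iff_fractionRing ℤ ℚ]
      have h1 : LinearIndependent ℤ (fun i => (B i : Fin d → ℤ)) :=
        B.linearIndependent.map' L.subtype (by simp)
      exact h1.map' (castQ d) (LinearMap.ker_eq_bot.2 (castQ_injective d))
    · refine ⟨fun i => B.repr ⟨w, hw⟩ i, ?_⟩
      have := congrArg L.subtype (B.sum_repr ⟨w, hw⟩)
      rw [map_sum] at this
      exact this.symm
  obtain ⟨r, b, hb, hbV, hbw⟩ := key
  have hspan : Submodule.span ℚ (Set.range fun i => castQ d (b i)) = V := by
    refine le_antisymm (Submodule.span_le.2 ?_) ?_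
    · rintro _ ⟨i, rfl⟩
      exact hbV i
    · intro v hv
      -- clear denominators
      obtain ⟨D, hD⟩ := IsLocalization.exist_integer_multiples_of_finset (nonZeroDivisors ℤ)
        (Finset.univ.image v)
      choose! w hw using hD
      have hD0 : ((D : ℤ) : ℚ) ≠ 0 := by
        exact_mod_cast nonZeroDivisors.coe_ne_zero D
      have hw' : castQ d (fun i => w (v i)) = ((D : ℤ) : ℚ) • v := by
        ext i
        have := hw (v i) (by simp)
        simpa using this
      obtain ⟨a, ha⟩ := hbw (fun i => w (v i)) (by rw [hw']; exact V.smul_mem _ hv)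
      have : v = ((D : ℤ) : ℚ)⁻¹ • castQ d (fun i => w (v i)) := by
        rw [hw', smul_smul, inv_mul_cancel₀ hD0, one_smul]
      rw [this, ha, map_sum]
      refine Submodule.smul_mem _ _ (Submodule.sum_mem _ fun i _ => ?_)
      rw [map_smul, ← Int.cast_smul_eq_zsmul ℚ]
      exact Submodule.smul_mem _ _ (Submodule.subset_span ⟨i, rfl⟩)
  have hr : r = Module.finrank ℚ V := by
    rw [← hspan, finrank_span_eq_card hb, Fintype.card_fin]
  subst hr
  exact ⟨b, hb, hbV, hbw⟩

/-- A chosen basis of the lattice `V ∩ ℤ^d`. -/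
noncomputable def intBasis {d : ℕ} (V : Submodule ℚ (Fin d → ℚ)) :
    Fin (Module.finrank ℚ V) → Fin d → ℤ := (exists_intBasis V).choose

lemma intBasis_spec {d : ℕ} (V : Submodule ℚ (Fin d → ℚ)) :
    LinearIndependent ℚ (fun i => castQ d (intBasis V i)) ∧ (∀ i, castQ d (intBasis V i) ∈ V) ∧
      ∀ w, castQ d w ∈ V → ∃ a : Fin (Module.finrank ℚ V) → ℤ, w = ∑ i, a i • intBasis V i :=
  (exists_intBasis V).choose_spec

lemma one_le_abs_mul_norm {D : ℤ} (hD : D ≠ 0) : 1 ≤ |(D : ℝ)| * ‖(D : ℚ_[p])‖ := by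
  have : ‖(D : ℚ_[p])‖ = ((p : ℝ) ^ (padicValInt p D))⁻¹ := by
    rw [Padic.norm_eq_zpow_neg_valuation (by exact_mod_cast hD), Padic.valuation_intCast,
      zpow_neg, zpow_natCast]
  rw [this, ← div_eq_mul_inv, one_le_div (pow_pos (p_pos p) _)]
  have h2 : p ^ padicValInt p D ≤ D.natAbs :=
    Nat.le_of_dvd (Int.natAbs_pos.2 hD) pow_padicValNat_dvd
  rw [← Int.cast_abs, Int.abs_eq_natAbs]
  exact_mod_cast h2

/-- Laplace expansion along the new row. -/
lemma minorHeight_cons_le {j d : ℕ} (b : Fin j → Fin d → ℤ) (v : Fin d → ℤ) :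
    minorHeight (Fin.cons v b : Fin (j + 1) → Fin d → ℤ) ≤ (j + 1) * nrm v * minorHeight b := by
  refine Finset.sup_le fun e _ => ?_
  rw [Matrix.det_succ_row_zero]
  refine (Int.natAbs_sum_le _ _).trans ?_
  calc _ ≤ ∑ k : Fin (j + 1), nrm v * minorHeight b := by
        refine Finset.sum_le_sum fun k _ => ?_
        rw [Int.natAbs_mul, Int.natAbs_mul, Int.natAbs_pow]
        simp only [Int.natAbs_neg, Int.natAbs_one, one_pow, one_mul]
        exact Nat.mul_le_mul (natAbs_le_nrm v _)
          (natAbs_det_le_minorHeight b fun i => e (k.succAbove i))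
    _ = _ := by simp; ring

/-- Passing to a sublattice multiplies every minor by the index. -/
lemma natAbs_det_mul_minorHeight_le {j d : ℕ} (b b' : Fin j → Fin d → ℤ)
    (A : Matrix (Fin j) (Fin j) ℤ) (hA : ∀ i, b i = ∑ k, A i k • b' k) :
    A.det.natAbs * minorHeight b' ≤ minorHeight b := by
  rcases (Finset.univ : Finset (Fin j → Fin d)).eq_empty_or_nonempty with h | h
  · simp [minorHeight, h]
  · obtain ⟨e, -, he⟩ := Finset.exists_mem_eq_sup Finset.univ h
      (fun e : Fin j → Fin d => (Matrix.of fun i k => b' i (e k)).det.natAbs)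
    have hmul : (Matrix.of fun i k => b i (e k)) = A * (Matrix.of fun i k => b' i (e k)) := by
      ext i k
      simp [hA i, Matrix.mul_apply]
    have := natAbs_det_le_minorHeight b e
    rw [hmul, Matrix.det_mul, Int.natAbs_mul] at this
    rwa [minorHeight, he]

/-- If `b` spans a sublattice of index `|det A|` in the lattice spanned by `b'`, then smallness of
the values of `b` at `x` passes to `b'` up to that index, because `1 ≤ |D| |D|_p` for an integer
`D ≠ 0`. -/
lemma max_norm_evalv_le {j d : ℕ} (b b' : Fin j → Fin d → ℤ) (A : Matrix (Fin j) (Fin j) ℤ)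
    (hA : ∀ i, b i = ∑ k, A i k • b' k) (hdet : A.det ≠ 0) (x : ℚ_[p]) (P C : ℝ) (hP : 0 < P)
    (hC : ∀ i, P * ‖evalv p x (b i)‖ ≤ C) (hC1 : 1 ≤ C) :
    max 1 (P * ‖fun i => evalv p x (b' i)‖) ≤ |(A.det : ℝ)| * C := by
  have h1 : (1 : ℝ) ≤ |(A.det : ℝ)| := by
    exact_mod_cast Int.one_le_abs hdet
  refine max_le (by nlinarith) ?_
  have h2 : ∀ k, ‖(A.det : ℚ_[p])‖ * ‖evalv p x (b' k)‖ ≤ C / P := by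
    intro k
    -- Cramer's rule expresses `det A • b' k` through the `b i`
    have h3 : A.det • b' k = ∑ i, A.adjugate k i • b i := by
      have h4 : ∀ l, ∑ i, A.adjugate k i * A i l = A.det * (1 : Matrix _ _ ℤ) k l := by
        intro l
        rw [← Matrix.mul_apply, Matrix.adjugate_mul, Matrix.smul_apply, smul_eq_mul]
      simp_rw [hA, Finset.smul_sum, smul_smul]
      rw [Finset.sum_comm]
      simp_rw [← Finset.sum_smul, h4, Matrix.one_apply]
      simp
    have h5 := congrArg (evalv p x) h3
    rw [map_smul, map_sum] at h5
    simp only [map_smul] at h5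
    simp only [zsmul_eq_mul] at h5
    rw [← norm_mul, h5]
    refine IsUltrametricDist.norm_sum_le_of_forall_le_of_nonneg (by positivity) fun i _ => ?_
    rw [norm_mul, le_div_iff₀ hP]
    have h6 := Padic.norm_int_le_one (p := p) (A.adjugate k i)
    have h7 := hC i
    have h8 := norm_nonneg (evalv p x (b i))
    calc _ ≤ 1 * ‖evalv p x (b i)‖ * P := by gcongr
      _ ≤ C := by linarith
  have h9 : ‖fun i => evalv p x (b' i)‖ ≤ |(A.det : ℝ)| * (C / P) := by
    refine (pi_norm_le_iff_of_nonneg (by positivity)).2 fun k => ?_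
    have h10 := one_le_abs_mul_norm p hdet
    calc _ ≤ (|(A.det : ℝ)| * ‖(A.det : ℚ_[p])‖) * ‖evalv p x (b' k)‖ :=
          le_mul_of_one_le_left (norm_nonneg _) h10
      _ = |(A.det : ℝ)| * (‖(A.det : ℚ_[p])‖ * ‖evalv p x (b' k)‖) := by ring
      _ ≤ _ := by gcongr; exact h2 k
  calc _ ≤ P * (|(A.det : ℝ)| * (C / P)) := by gcongr
    _ = _ := by field_simp

lemma exists_matrix {j d : ℕ} (b b' : Fin j → Fin d → ℤ)
    (hb : LinearIndependent ℚ fun i => castQ d (b i))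
    (h : ∀ i, ∃ a : Fin j → ℤ, b i = ∑ k, a k • b' k) :
    ∃ A : Matrix (Fin j) (Fin j) ℤ, (∀ i, b i = ∑ k, A i k • b' k) ∧ A.det ≠ 0 := by
  choose a ha using h
  refine ⟨Matrix.of a, ha, fun hdet => ?_⟩
  obtain ⟨u, hu, hu'⟩ := Matrix.exists_vecMul_eq_zero_iff.2 hdet
  rw [← LinearIndependent.iff_fractionRing ℤ ℚ] at hb
  have h0 : ∑ i, u i • castQ d (b i) = 0 := by
    have h1 : ∑ i, u i • b i = 0 := by
      have h4 : ∀ l, ∑ i, u i * a i l = 0 := fun l => congrFun hu' l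
      simp_rw [ha, Finset.smul_sum, smul_smul]
      rw [Finset.sum_comm]
      simp_rw [← Finset.sum_smul, h4]
      simp
    have := congrArg (castQ d) h1
    simpa only [map_sum, map_smul, map_zero] using this
  exact hu (funext (Fintype.linearIndependent_iff.1 hb u h0))

/-- The function `x ↦ covol (V ∩ Λ_x)`, normalised by `p^{M dim V}`, where `Λ_x` is the lattice of
integer polynomials of degree `< d` with `|P(x)|_p ≤ p^{-dM}` (of covolume
`p^{dM}` when `x ∈ ℤ_p`), and the covolume is measured by `minorHeight`: the index of `V ∩ Λ_x` in
`V ∩ ℤ^d` is `max (1, p^{dM} max_i |b_i(x)|_p)` for a basis `b` of `V ∩ ℤ^d`. -/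
noncomputable def phi {d : ℕ} (M : ℕ) (V : Submodule ℚ (Fin d → ℚ)) (x : ℚ_[p]) : ℝ :=
  minorHeight (intBasis V) / (p : ℝ) ^ (M * Module.finrank ℚ V) *
    max 1 ((p : ℝ) ^ (d * M) * ‖fun i => evalv p x (intBasis V i)‖)

/-- Adjoining a vector of the lattice `Λ_x` to `V` multiplies the covolume by at most a constant
times the length of the vector. -/
lemma phi_sup_span_le {d : ℕ} (M : ℕ) (V : Submodule ℚ (Fin d → ℚ)) (x : ℚ_[p]) (v : Fin d → ℤ)
    (hv : castQ d v ∉ V) (hvx : ‖evalv p x v‖ ≤ ((p : ℝ) ^ (d * M))⁻¹) :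
    phi p M (V ⊔ Submodule.span ℚ {castQ d v}) x ≤
      d * nrm v / (p : ℝ) ^ M * phi p M V x := by
  obtain ⟨hb, hbV, -⟩ := intBasis_spec V
  set W := V ⊔ Submodule.span ℚ {castQ d v} with hW
  obtain ⟨hb', hbW', hbw'⟩ := intBasis_spec W
  have hspan : Submodule.span ℚ (Set.range fun i => castQ d (intBasis V i)) ≤ V := by
    rw [Submodule.span_le]; rintro _ ⟨i, rfl⟩; exact hbV i
  have hcons : LinearIndependent ℚ
      (fun i => castQ d ((Fin.cons v (intBasis V) : Fin (_ + 1) → Fin d → ℤ) i)) := by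
    have : (fun i => castQ d ((Fin.cons v (intBasis V) : Fin (_ + 1) → Fin d → ℤ) i)) =
        Fin.cons (castQ d v) (fun i => castQ d (intBasis V i)) := by
      ext i l
      refine Fin.cases ?_ (fun i => ?_) i <;> simp
    rw [this]
    exact LinearIndependent.finCons hb fun h => hv (hspan h)
  have hconsW : ∀ i, castQ d ((Fin.cons v (intBasis V) : Fin (_ + 1) → Fin d → ℤ) i) ∈ W := by
    intro i
    refine Fin.cases ?_ (fun i => ?_) i
    · exact Submodule.mem_sup_right (Submodule.mem_span_singleton_self _)
    · exact Submodule.mem_sup_left (hbV i)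
  have hrank : Module.finrank ℚ W = Module.finrank ℚ V + 1 := by
    refine le_antisymm ?_ ?_
    · refine (Submodule.finrank_add_le_finrank_add_finrank _ _).trans ?_
      have : Module.finrank ℚ (Submodule.span ℚ {castQ d v}) ≤ 1 := by
        simpa using finrank_span_le_card (R := ℚ) ({castQ d v} : Set (Fin d → ℚ))
      omega
    · exact Submodule.finrank_lt_finrank_of_lt (left_lt_sup.2 fun h =>
        hv (h (Submodule.mem_span_singleton_self _)))
  have hd : Module.finrank ℚ V + 1 ≤ d := by
    rw [← hrank]
    simpa using Submodule.finrank_le W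
  unfold phi
  generalize intBasis W = b' at *
  generalize Module.finrank ℚ W = r at *
  subst hrank
  obtain ⟨A, hA, hdet⟩ := exists_matrix _ b' hcons fun i => hbw' _ (hconsW i)
  have hpos := pow_pos (p_pos p) (d * M)
  have h1 := natAbs_det_mul_minorHeight_le _ b' A hA
  have h2 := minorHeight_cons_le (intBasis V) v
  have h3 := max_norm_evalv_le p _ b' A hA hdet x ((p : ℝ) ^ (d * M))
    (max 1 ((p : ℝ) ^ (d * M) * ‖fun i => evalv p x (intBasis V i)‖)) hpos (by
      intro i
      refine Fin.cases ?_ (fun i => ?_) i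
      · refine le_max_of_le_left ?_
        calc _ ≤ (p : ℝ) ^ (d * M) * ((p : ℝ) ^ (d * M))⁻¹ := by
              gcongr; exact hvx
          _ = 1 := mul_inv_cancel₀ hpos.ne'
      · refine le_max_of_le_right ?_
        gcongr
        exact norm_le_pi_norm (fun i => evalv p x (intBasis V i)) i) (le_max_left _ _)
  set m := max 1 ((p : ℝ) ^ (d * M) * ‖fun i => evalv p x (intBasis V i)‖)
  have hm : 0 ≤ m := zero_le_one.trans (le_max_left _ _)
  have h4 : |(A.det : ℝ)| * minorHeight b' ≤ d * nrm v * minorHeight (intBasis V) := by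
    rw [← Int.cast_abs, Int.abs_eq_natAbs]
    have : A.det.natAbs * minorHeight b' ≤ d * nrm v * minorHeight (intBasis V) :=
      (h1.trans h2).trans (by gcongr)
    exact_mod_cast this
  calc _ ≤ (minorHeight b' : ℝ) / (p : ℝ) ^ (M * (Module.finrank ℚ V + 1)) *
        (|(A.det : ℝ)| * m) := by
        gcongr
    _ = |(A.det : ℝ)| * minorHeight b' / (p : ℝ) ^ (M * (Module.finrank ℚ V + 1)) * m := by ring
    _ ≤ d * nrm v * minorHeight (intBasis V) / (p : ℝ) ^ (M * (Module.finrank ℚ V + 1)) * m := by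
        gcongr
    _ = _ := by
        have := (p_pos p).ne'
        rw [mul_add, mul_one, pow_add]
        field_simp

/-! ### Integer polynomials with small value are rarely short -/

lemma card_le_of_chain {d : ℕ} (F : Finset (Submodule ℚ (Fin d → ℚ)))
    (hF : ∀ U ∈ F, ∀ V ∈ F, U ≤ V ∨ V ≤ U) (hbot : ⊥ ∉ F) : F.card ≤ d := by
  have h : Set.InjOn (fun V : Submodule ℚ (Fin d → ℚ) => Module.finrank ℚ V) F := by
    intro U hU V hV h
    rcases hF U hU V hV with h' | h'
    · exact Submodule.eq_of_le_of_finrank_eq h' h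
    · exact (Submodule.eq_of_le_of_finrank_eq h' h.symm).symm
  rw [← Finset.card_image_of_injOn h]
  calc _ ≤ (Finset.Icc 1 d).card := by
        refine Finset.card_le_card fun r hr => ?_
        obtain ⟨V, hV, rfl⟩ := Finset.mem_image.1 hr
        rw [Finset.mem_Icc]
        refine ⟨Submodule.one_le_finrank_iff.2 ?_, by simpa using Submodule.finrank_le V⟩
        rintro rfl
        exact hbot hV
    _ = d := by simp

lemma exists_cball_phi_lt_one {d : ℕ} (M : ℕ) (V : Submodule ℚ (Fin d → ℚ)) (x : ℚ_[p])
    (h : phi p M V x < 1) : ∃ l : ℤ, ∀ y ∈ cball p x l, phi p M V y < 1 := by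
  have hc : Continuous (phi p M V) := by
    unfold phi
    refine continuous_const.mul (continuous_const.max (continuous_const.mul
      (continuous_norm.comp (continuous_pi fun i => ?_))))
    simp_rw [evalv_apply]
    fun_prop
  obtain ⟨r, hr, hr'⟩ := Metric.isOpen_iff.1 (isOpen_lt hc continuous_const) x h
  obtain ⟨l, hl⟩ := exists_pow_lt_of_lt_one hr (inv_lt_one_of_one_lt₀ (one_lt_p p))
  refine ⟨l, fun y hy => hr' ?_⟩
  rw [Metric.mem_ball, dist_eq_norm]
  refine lt_of_le_of_lt hy ?_
  rwa [zpow_neg, zpow_natCast, ← inv_pow]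

/-- The functions `phi p M V` are good on balls: either the constant factor already keeps `phi` large,
or one basis polynomial with large value somewhere on the ball keeps it large outside a small set. -/
lemma phi_good [MeasurableSpace ℚ_[p]] [BorelSpace ℚ_[p]] (μ : Measure ℚ_[p])
    [μ.IsAddHaarMeasure] (n e M : ℕ) (V : Submodule ℚ (Fin (n + 1) → ℚ)) (a : ℚ_[p]) (k : ℤ)
    (h : ∃ y ∈ cball p a k, 1 ≤ phi p M V y) :
    μ {x ∈ cball p a k | phi p M V x < ((p : ℝ) ^ (e * n))⁻¹} ≤
      n / (p : ENNReal) ^ e * μ (cball p a k) := by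
  obtain ⟨y, hy, hy1⟩ := h
  have hpe : (1 : ℝ) ≤ (p : ℝ) ^ (e * n) := one_le_pow₀ (one_lt_p p).le
  unfold phi at hy1 ⊢
  set κ := (minorHeight (intBasis V) : ℝ) / (p : ℝ) ^ (M * Module.finrank ℚ V) with hκ
  have hP : (0 : ℝ) < (p : ℝ) ^ ((n + 1) * M) := pow_pos (p_pos p) _
  set P := (p : ℝ) ^ ((n + 1) * M)
  have hκ0 : 0 ≤ κ := by have := p_pos p; positivity
  by_cases hκε : ((p : ℝ) ^ (e * n))⁻¹ ≤ κ
  · have : {x ∈ cball p a k | κ * max 1 (P * ‖fun i => evalv p x (intBasis V i)‖) <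
        ((p : ℝ) ^ (e * n))⁻¹} = ∅ := by
      ext x
      simp only [Set.mem_ofPred_eq, Set.mem_empty_iff_false, iff_false, not_and, not_lt]
      intro _
      exact hκε.trans (le_mul_of_one_le_right hκ0 (le_max_left _ _))
    rw [this]
    simp
  · rw [not_le] at hκε
    have hκ1 : κ < 1 := hκε.trans_le (inv_le_one_of_one_le₀ hpe)
    have hκpos : 0 < κ := by
      rcases hκ0.eq_or_lt with h | h
      · rw [← h] at hy1
        norm_num at hy1
      · exact h
    obtain ⟨i, hi⟩ : ∃ i, 1 ≤ κ * P * ‖evalv p y (intBasis V i)‖ := by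
      by_contra! hcon
      have h1 : ‖fun i => evalv p y (intBasis V i)‖ < (κ * P)⁻¹ := by
        refine (pi_norm_lt_iff (by positivity)).2 fun i => ?_
        rw [← one_div, lt_div_iff₀' (by positivity)]
        exact hcon i
      have h2 : κ * max 1 (P * ‖fun i => evalv p y (intBasis V i)‖) < 1 := by
        rw [mul_max_of_nonneg _ _ hκ0]
        refine max_lt (by linarith) ?_
        rw [← mul_assoc]
        calc _ < κ * P * (κ * P)⁻¹ := by gcongr
          _ = 1 := mul_inv_cancel₀ (by positivity)
      linarith
    set v := intBasis V i
    let f : Polynomial ℚ_[p] := ∑ l : Fin (n + 1), Polynomial.C (v l : ℚ_[p]) * Polynomial.X ^ (l : ℕ)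
    have hf : ∀ x, f.eval x = evalv p x v := by
      intro x
      simp [f, evalv_apply, Polynomial.eval_finsetSum]
    have hfd : f.degree < (n + 1 : ℕ) := Polynomial.degree_sum_fin_lt _
    have hgood := polynomial_good p μ n f hfd a k e y hy
    simp_rw [hf] at hgood
    have hsub : μ {x ∈ cball p a k | κ * max 1 (P * ‖fun i => evalv p x (intBasis V i)‖) <
        ((p : ℝ) ^ (e * n))⁻¹} ≤
        μ {x ∈ cball p a k | (p : ℝ) ^ (e * n) * ‖evalv p x v‖ < ‖evalv p y v‖} := by
      refine measure_mono ?_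
      rintro x ⟨hx, hx1⟩
      refine ⟨hx, ?_⟩
      have h1 : ‖evalv p x v‖ ≤ ‖fun i => evalv p x (intBasis V i)‖ :=
        norm_le_pi_norm (fun i => evalv p x (intBasis V i)) i
      have h2 : κ * P * ‖evalv p x v‖ < ((p : ℝ) ^ (e * n))⁻¹ := by
        refine lt_of_le_of_lt ?_ hx1
        rw [mul_assoc]
        gcongr
        exact le_max_of_le_right (by gcongr)
      have h3 : κ * P * ((p : ℝ) ^ (e * n) * ‖evalv p x v‖) < κ * P * ‖evalv p y v‖ := by
        refine lt_of_lt_of_le ?_ hi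
        calc _ = (p : ℝ) ^ (e * n) * (κ * P * ‖evalv p x v‖) := by ring
          _ < (p : ℝ) ^ (e * n) * ((p : ℝ) ^ (e * n))⁻¹ := by gcongr
          _ = 1 := mul_inv_cancel₀ (by positivity)
      exact lt_of_mul_lt_mul_left h3 (by positivity)
    refine hsub.trans ?_
    have hp0 : (p : ENNReal) ^ e ≠ 0 :=
      pow_ne_zero _ (by exact_mod_cast (Fact.out : p.Prime).ne_zero)
    have hpt : (p : ENNReal) ^ e ≠ ⊤ := ENNReal.pow_ne_top (ENNReal.natCast_ne_top p)
    rw [← ENNReal.mul_div_right_comm, ENNReal.le_div_iff_mul_le (Or.inl hp0) (Or.inl hpt), mul_comm]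
    exact hgood

lemma minorHeight_pos {j d : ℕ} (b : Fin j → Fin d → ℤ)
    (hb : LinearIndependent ℚ fun i => castQ d (b i)) : 1 ≤ minorHeight b := by
  let A : Matrix (Fin j) (Fin d) ℚ := Matrix.of fun i => castQ d (b i)
  have hA : A.rank = j := by
    have := LinearIndependent.rank_matrix (M := A) hb
    simpa using this
  rw [Matrix.rank_eq_finrank_span_cols] at hA
  obtain ⟨r, hr, f, hf, hfi⟩ : ∃ r, r = j ∧ ∃ f : Fin r → Fin j → ℚ,
      (∀ i, f i ∈ Set.range A.col) ∧ LinearIndependent ℚ f := by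
    obtain ⟨f, hf, -, hfi⟩ := Submodule.exists_fun_fin_finrank_span_eq ℚ (Set.range A.col)
    exact ⟨_, hA, f, hf, hfi⟩
  subst hr
  choose e he using hf
  let B : Matrix (Fin r) (Fin r) ℤ := Matrix.of fun i k => b i (e k)
  have hB : (B.map (Int.castRingHom ℚ)).col = f := by
    ext k i
    rw [← he k]
    rfl
  have h1 : IsUnit (B.map (Int.castRingHom ℚ)) := by
    rw [← Matrix.linearIndependent_cols_iff_isUnit, hB]
    exact hfi
  have h2 : B.det ≠ 0 := by
    intro h0
    rw [Matrix.isUnit_iff_isUnit_det, isUnit_iff_ne_zero, ← RingHom.mapMatrix_apply,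
      ← RingHom.map_det, h0] at h1
    exact h1 (map_zero _)
  exact (Int.natAbs_pos.2 h2).trans_le (natAbs_det_le_minorHeight b e)

/-- A polynomial with integer coefficients not all divisible by `p` takes a value on a given ball
that is bounded below in terms of the ball only, by Lagrange interpolation. -/
lemma exists_large_value (d : ℕ) (a : ℚ_[p]) (k : ℤ) : ∃ M₀ : ℕ, ∀ v : Fin d → ℤ,
    (∃ i, ¬ (p : ℤ) ∣ v i) → ∃ y ∈ cball p a k, ((p : ℝ) ^ M₀)⁻¹ ≤ ‖evalv p y v‖ := by
  have hinf : (cball p a k).Infinite := by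
    refine infinite_of_mem_nhds a ((isOpen_cball p a k).mem_nhds (mem_cball_self p a k))
  let y : Fin d → ℚ_[p] := fun i => hinf.natEmbedding _ i
  have hyinj : Function.Injective y := by
    intro i j h
    exact Fin.ext ((hinf.natEmbedding _).injective (Subtype.ext h))
  have hy : ∀ i, y i ∈ cball p a k := fun i => (hinf.natEmbedding _ i).2
  let W := Matrix.vandermonde y
  have hW : IsUnit W.det := isUnit_iff_ne_zero.2 (Matrix.det_vandermonde_ne_zero_iff.2 hyinj)
  obtain ⟨M₀, hM₀⟩ := pow_unbounded_of_one_lt (∑ i, ∑ j, ‖W⁻¹ i j‖) (one_lt_p p)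
  refine ⟨M₀, fun v ⟨i, hi⟩ => ?_⟩
  by_contra! hcon
  have h1 : (W⁻¹).mulVec (W.mulVec fun i => (v i : ℚ_[p])) = fun i => (v i : ℚ_[p]) := by
    rw [Matrix.mulVec_mulVec, Matrix.nonsing_inv_mul _ hW, Matrix.one_mulVec]
  have h2 : W.mulVec (fun i => (v i : ℚ_[p])) = fun l => evalv p (y l) v := by
    ext l
    simp [W, Matrix.mulVec, dotProduct, evalv_apply, mul_comm]
  have h3 := congrFun h1 i
  rw [h2] at h3
  refine hi (Padic.norm_intCast_lt_one_iff.1 ?_)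
  rw [← h3, Matrix.mulVec, dotProduct]
  have hp := pow_pos (p_pos p) M₀
  refine lt_of_le_of_lt (Finset.Nonempty.norm_sum_le_sup'_norm ⟨i, Finset.mem_univ i⟩ _) ?_
  refine (Finset.sup'_lt_iff _).2 fun l _ => ?_
  rw [norm_mul]
  have h4 : ‖W⁻¹ i l‖ < (p : ℝ) ^ M₀ := by
    refine lt_of_le_of_lt ?_ hM₀
    refine (Finset.single_le_sum (f := fun l => ‖W⁻¹ i l‖) (fun _ _ => norm_nonneg _)
      (Finset.mem_univ l)).trans ?_
    exact Finset.single_le_sum (f := fun i => ∑ l, ‖W⁻¹ i l‖)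
      (fun _ _ => Finset.sum_nonneg fun _ _ => norm_nonneg _) (Finset.mem_univ i)
  calc _ ≤ (p : ℝ) ^ M₀ * ‖evalv p (y l) v‖ := by gcongr
    _ < (p : ℝ) ^ M₀ * ((p : ℝ) ^ M₀)⁻¹ := by gcongr; exact hcon _ (hy l)
    _ = 1 := mul_inv_cancel₀ hp.ne.symm

/-- `V ∩ ℤ^d` is saturated, so its basis vectors are not divisible by `p`. -/
lemma exists_not_dvd_intBasis {d : ℕ} (V : Submodule ℚ (Fin d → ℚ))
    (i : Fin (Module.finrank ℚ V)) : ∃ l, ¬ (p : ℤ) ∣ intBasis V i l := by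
  obtain ⟨hb, hbV, hbw⟩ := intBasis_spec V
  by_contra! hcon
  choose w hw using hcon
  have hw' : intBasis V i = (p : ℤ) • w := by
    ext l
    simpa using hw l
  have hp0 : (p : ℚ) ≠ 0 := by exact_mod_cast (Fact.out : p.Prime).ne_zero
  have hwV : castQ d w ∈ V := by
    have h1 : castQ d w = (p : ℚ)⁻¹ • castQ d (intBasis V i) := by
      rw [hw']
      ext l
      simp [hp0]
    rw [h1]
    exact V.smul_mem _ (hbV i)
  obtain ⟨a, ha⟩ := hbw w hwV
  rw [← LinearIndependent.iff_fractionRing ℤ ℚ] at hb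
  have h2 : ∑ l, (Pi.single i (1 : ℤ) - (p : ℤ) • a : Fin _ → ℤ) l • castQ d (intBasis V l) = 0 := by
    have h3 : ∑ l, (Pi.single i (1 : ℤ) - (p : ℤ) • a : Fin _ → ℤ) l • intBasis V l = 0 := by
      simp only [Pi.sub_apply, Pi.smul_apply, sub_smul, Finset.sum_sub_distrib, smul_assoc]
      rw [← Finset.smul_sum, ← ha, ← hw', sub_eq_zero]
      rw [Finset.sum_eq_single i] <;> simp +contextual
    have := congrArg (castQ d) h3
    simpa only [map_sum, map_smul, map_zero] using this
  have h4 := Fintype.linearIndependent_iff.1 hb _ h2 i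
  simp only [Pi.sub_apply, Pi.single_eq_same, Pi.smul_apply, smul_eq_mul, sub_eq_zero] at h4
  have h5 : (p : ℤ) ∣ 1 := ⟨_, h4⟩
  have h6 := (Fact.out : p.Prime).one_lt
  have := Int.le_of_dvd one_pos h5
  omega

/-- On a fixed ball all the functions `phi p M V` reach `1`, once `M` is large. -/
lemma exists_one_le_phi (d : ℕ) (a : ℚ_[p]) (k : ℤ) : ∃ M₀ : ℕ, ∀ M, M₀ ≤ M →
    ∀ V : Submodule ℚ (Fin d → ℚ), V ≠ ⊥ → ∃ y ∈ cball p a k, 1 ≤ phi p M V y := by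
  obtain ⟨M₀, hM₀⟩ := exists_large_value p d a k
  refine ⟨M₀, fun M hM V hV => ?_⟩
  obtain ⟨hb, hbV, hbw⟩ := intBasis_spec V
  have hmin : (1 : ℝ) ≤ minorHeight (intBasis V) := by exact_mod_cast minorHeight_pos _ hb
  have hj : 1 ≤ Module.finrank ℚ V := Submodule.one_le_finrank_iff.2 hV
  have hjd : Module.finrank ℚ V ≤ d := by simpa using Submodule.finrank_le V
  have hpM : ∀ m : ℕ, (0 : ℝ) < (p : ℝ) ^ m := fun m => pow_pos (p_pos p) m
  -- it suffices to make the maximum of the values of the basis not too small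
  have key : ∀ y (r : ℕ), r + M * Module.finrank ℚ V ≤ d * M →
      ((p : ℝ) ^ r)⁻¹ ≤ ‖fun i => evalv p y (intBasis V i)‖ → 1 ≤ phi p M V y := by
    intro y r hr hy
    unfold phi
    calc (1 : ℝ) ≤ 1 / (p : ℝ) ^ (M * Module.finrank ℚ V) *
          ((p : ℝ) ^ (d * M) * ((p : ℝ) ^ r)⁻¹) := by
          rw [one_div, ← mul_assoc, mul_comm, ← mul_assoc, ← mul_inv, ← pow_add,
            inv_mul_eq_div, one_le_div (hpM _)]
          exact pow_le_pow_right₀ (one_lt_p p).le hr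
      _ ≤ _ := by
          have h0 := (hpM (M * Module.finrank ℚ V))
          have h1 := (hpM (d * M))
          have h2 := (hpM r)
          gcongr
          exact le_max_of_le_right (by gcongr)
  rcases hjd.lt_or_eq with hlt | heq
  · let i : Fin (Module.finrank ℚ V) := ⟨0, hj⟩
    obtain ⟨y, hy, hyv⟩ := hM₀ _ (exists_not_dvd_intBasis p V i)
    refine ⟨y, hy, key y M₀ ?_ (hyv.trans (norm_le_pi_norm (fun i => evalv p y (intBasis V i)) i))⟩
    calc M₀ + M * Module.finrank ℚ V ≤ M * (Module.finrank ℚ V + 1) := by rw [mul_add]; omega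
      _ ≤ M * d := Nat.mul_le_mul_left _ hlt
      _ = _ := mul_comm _ _
  · -- `V` is everything, and contains the constant polynomial `1`
    refine ⟨a, mem_cball_self p a k, key a 0 (by rw [heq, mul_comm]; simp) ?_⟩
    have htop : V = ⊤ := Submodule.eq_top_of_finrank_eq (by simpa using heq)
    have hd : 0 < d := by omega
    let e₀ : Fin d → ℤ := Pi.single ⟨0, hd⟩ 1
    obtain ⟨c, hc⟩ := hbw e₀ (by rw [htop]; trivial)
    have he₀ : evalv p a e₀ = 1 := by
      rw [evalv_apply, Finset.sum_eq_single ⟨0, hd⟩]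
      · simp [e₀]
      · intro i _ hi
        simp [e₀, hi]
      · simp
    have h1 : ‖evalv p a e₀‖ ≤ ‖fun i => evalv p a (intBasis V i)‖ := by
      rw [hc, map_sum]
      refine IsUltrametricDist.norm_sum_le_of_forall_le_of_nonneg (norm_nonneg _) fun i _ => ?_
      rw [map_smul, zsmul_eq_mul, norm_mul]
      refine (mul_le_of_le_one_left (norm_nonneg _) (Padic.norm_int_le_one _)).trans ?_
      exact norm_le_pi_norm (fun i => evalv p a (intBasis V i)) i
    simpa [he₀] using h1

lemma phi_bot {d : ℕ} (M : ℕ) (x : ℚ_[p]) :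
    phi p M (⊥ : Submodule ℚ (Fin d → ℚ)) x = 1 := by
  have h0 : Module.finrank ℚ (⊥ : Submodule ℚ (Fin d → ℚ)) = 0 := finrank_bot ℚ _
  unfold phi
  generalize intBasis (⊥ : Submodule ℚ (Fin d → ℚ)) = b
  generalize Module.finrank ℚ (⊥ : Submodule ℚ (Fin d → ℚ)) = r at *
  subst h0
  have : ‖fun i => evalv p x (b i)‖ = 0 := by
    rw [norm_eq_zero]
    exact Subsingleton.elim _ _
  rw [this]
  simp [minorHeight]

/-- At a marked point, the lattice `Λ_x` has no short nonzero vector. -/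
lemma le_nrm_of_marked {d : ℕ} (M : ℕ) (ε : ℝ) (hε : ε ≤ 1) (x : ℚ_[p])
    (h : Marked (fun V : Submodule ℚ (Fin d → ℚ) => phi p M V) ε x) (v : Fin d → ℤ) (hv : v ≠ 0)
    (hvx : ‖evalv p x v‖ ≤ ((p : ℝ) ^ (d * M))⁻¹) : ε * (p : ℝ) ^ M ≤ d * nrm v := by
  classical
  obtain ⟨F, hF, hbot, hlt, hge⟩ := h
  have hv' : castQ d v ≠ 0 := fun h0 => hv (castQ_injective d (by rw [h0, map_zero]))
  obtain ⟨V₀, hV₀, hmax⟩ := ((insert ⊥ F).filter fun V => castQ d v ∉ V).exists_maximal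
    ⟨⊥, by simp [hv']⟩
  simp only [Finset.mem_filter, Finset.mem_insert] at hV₀ hmax
  obtain ⟨hV₀F, hvV₀⟩ := hV₀
  set W := V₀ ⊔ Submodule.span ℚ {castQ d v} with hW
  have hvW : castQ d v ∈ W := Submodule.mem_sup_right (Submodule.mem_span_singleton_self _)
  have hcomp : ∀ U ∈ F, U ≤ V₀ ∨ V₀ ≤ U := by
    intro U hU
    rcases hV₀F with h | h
    · exact Or.inr (h ▸ bot_le)
    · exact hF U hU V₀ h
  have h1 : ε ≤ phi p M W x := by
    by_cases hWF : W ∈ F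
    · exact (hlt W hWF).1
    · refine hε.trans (hge W ?_ hWF fun U hU => ?_)
      · intro h0
        rw [h0] at hvW
        exact hv' ((Submodule.mem_bot ℚ).1 hvW)
      · by_cases hvU : castQ d v ∈ U
        · left
          rcases hcomp U hU with h | h
          · exact absurd (h hvU) hvV₀
          · exact sup_le h (by simpa using hvU)
        · right
          refine le_trans ?_ le_sup_left
          rcases hcomp U hU with h | h
          · exact h
          · exact hmax ⟨Or.inr hU, hvU⟩ h
  have h2 : phi p M V₀ x ≤ 1 := by
    rcases hV₀F with h | h
    · rw [h, phi_bot]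
    · exact (hlt V₀ h).2.le
  have h3 := phi_sup_span_le p M V₀ x v hvV₀ hvx
  have hp := pow_pos (p_pos p) M
  have h4 : ε ≤ d * nrm v / (p : ℝ) ^ M := by
    refine h1.trans (h3.trans ?_)
    exact mul_le_of_le_one_right (by positivity) h2
  rwa [le_div_iff₀ hp] at h4

/-- Outside a set of small relative measure, the lattices `Λ_x` have no short nonzero vectors. -/
lemma measure_short_le [MeasurableSpace ℚ_[p]] [BorelSpace ℚ_[p]] (μ : Measure ℚ_[p])
    [μ.IsAddHaarMeasure] (n e : ℕ) (a : ℚ_[p]) (k : ℤ) : ∃ M₀ : ℕ, ∀ M, M₀ ≤ M →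
    μ {x ∈ cball p a k | ∃ v : Fin (n + 1) → ℤ, v ≠ 0 ∧
        ‖evalv p x v‖ ≤ ((p : ℝ) ^ ((n + 1) * M))⁻¹ ∧
        (n + 1) * (p : ℝ) ^ (e * n) * nrm v < (p : ℝ) ^ M} ≤
      (n + 1 : ℕ) * (n / (p : ENNReal) ^ e * p) * μ (cball p a k) := by
  obtain ⟨M₀, hM₀⟩ := exists_one_le_phi p (n + 1) a (k - 1)
  refine ⟨M₀, fun M hM => ?_⟩
  have h := measure_not_marked_le p μ (fun V : Submodule ℚ (Fin (n + 1) → ℚ) => phi p M V)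
    ((p : ℝ) ^ (e * n))⁻¹ (n / (p : ENNReal) ^ e) (n + 1) card_le_of_chain
    (exists_cball_phi_lt_one p M) (phi_good p μ n e M) (n + 1) ∅ a k (by simp) (by simp) (by simp)
    (by simp) (fun V hV _ _ => hM₀ M hM V hV)
  refine le_trans (measure_mono ?_) h
  rintro x ⟨hx, v, hv, hvx, hlt⟩
  refine ⟨hx, by simp, fun hm => ?_⟩
  have hpe : (1 : ℝ) ≤ (p : ℝ) ^ (e * n) := one_le_pow₀ (one_lt_p p).le
  have := le_nrm_of_marked p M _ (inv_le_one_of_one_le₀ hpe) x hm v hv hvx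
  rw [inv_mul_le_iff₀ (by positivity)] at this
  push_cast at this
  linarith

/-! ### Bases of short vectors -/

lemma nrm_le_iff {d : ℕ} {v : Fin d → ℤ} {B : ℕ} : nrm v ≤ B ↔ ∀ i, (v i).natAbs ≤ B := by
  simp [nrm]

lemma natAbs_sub_le_of_div_eq {a b s : ℕ} (hs : 0 < s) (h : a / s = b / s) :
    ((a : ℤ) - b).natAbs ≤ s := by
  have h4 := Nat.div_add_mod a s
  have h5 := Nat.div_add_mod b s
  have h6 := Nat.mod_lt a hs
  have h7 := Nat.mod_lt b hs
  rw [h] at h4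
  generalize s * (b / s) = c at *
  generalize a % s = x at *
  generalize b % s = y at *
  omega

/-- `x` is `(D, M)`-good if every nonzero integer polynomial of degree `≤ n` whose value at `x` is
at most `p^{-(n+1)M}` has height at least `p^M / D`. -/
def IsGood (n D M : ℕ) (x : ℚ_[p]) : Prop :=
  ∀ v : Fin (n + 1) → ℤ, v ≠ 0 → ‖evalv p x v‖ ≤ ((p : ℝ) ^ ((n + 1) * M))⁻¹ → p ^ M ≤ D * nrm v

/-- Pigeonhole principle: at a good point, every nonzero linear functional is nonzero on some
vector of the lattice `Λ_x` of length `O(p^M)`. The boxes are long in the direction of the largest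
coefficient of the functional and short in all other directions, so that a vector in the kernel of
the functional would be too short for a good point. -/
lemma exists_lattice_vector {n D g M : ℕ} (hn : 1 ≤ n) (hg : n * D < p ^ g) (hM : g ≤ M)
    {x : ℚ_[p]} (hx : ‖x‖ ≤ 1) (hgood : IsGood p n D M x) (a : Fin (n + 1) → ℚ) (ha : a ≠ 0) :
    ∃ v : Fin (n + 1) → ℤ, ‖evalv p x v‖ ≤ ((p : ℝ) ^ ((n + 1) * M))⁻¹ ∧
      nrm v ≤ p ^ (M + (g * n + 1)) ∧ ∑ i, a i * v i ≠ 0 := by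
  have hp1 := (Fact.out : p.Prime).one_lt
  have hppos : ∀ m, 0 < p ^ m := fun m => pow_pos (by omega) m
  obtain ⟨i₀, -, hi₀⟩ := Finset.exists_max_image Finset.univ (fun i => |a i|) Finset.univ_nonempty
  have hai₀ : 0 < |a i₀| := by
    obtain ⟨i, hi⟩ := Function.ne_iff.1 ha
    exact (abs_pos.2 hi).trans_le (hi₀ i (Finset.mem_univ i))
  set f := g * n + 1 with hf
  let X : ℤ_[p] := ⟨x, hx⟩
  let ev : (Fin (n + 1) → ℤ) → ℤ_[p] := fun v => ∑ i, (v i : ℤ_[p]) * X ^ (i : ℕ)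
  have hev : ∀ v, ((ev v : ℤ_[p]) : ℚ_[p]) = evalv p x v := by
    intro v
    have hX : (X : ℚ_[p]) = x := rfl
    simp only [ev, evalv_apply, PadicInt.coe_sum, PadicInt.coe_mul, PadicInt.coe_intCast,
      PadicInt.coe_pow, hX]
  have hevsub : ∀ v w, ev (v - w) = ev v - ev w := by
    intro v w
    simp [ev, sub_mul, Finset.sum_sub_distrib]
  let U := Fin (n + 1) → Fin (p ^ (M + f))
  let toZ : U → Fin (n + 1) → ℤ := fun u i => ((u i : ℕ) : ℤ)
  have hcell : ∀ u : U, ∀ k : Fin n, (u (i₀.succAbove k) : ℕ) / p ^ (M - g) < p ^ (f + g) := by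
    intro u k
    rw [Nat.div_lt_iff_lt_mul (hppos _), ← pow_add, show f + g + (M - g) = M + f by omega]
    exact (u _).2
  have : NeZero (p ^ ((n + 1) * M)) := ⟨(hppos _).ne'⟩
  let Φ : U → ZMod (p ^ ((n + 1) * M)) × (Fin n → Fin (p ^ (f + g))) := fun u =>
    (PadicInt.toZModPow _ (ev (toZ u)), fun k => ⟨_, hcell u k⟩)
  obtain ⟨u, u', hne, hΦ⟩ := Fintype.exists_ne_map_eq_of_card_lt Φ (by
    simp only [U, Fintype.card_prod, ZMod.card, Fintype.card_pi, Fintype.card_fin,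
      Finset.prod_const, Finset.card_univ]
    rw [← pow_mul, ← pow_mul, ← pow_add]
    refine Nat.pow_lt_pow_right hp1 ?_
    rw [hf]
    ring_nf
    omega)
  have h1 := congrArg Prod.fst hΦ
  have h2 := congrArg Prod.snd hΦ
  set v := toZ u - toZ u' with hv
  have hv0 : v ≠ 0 := by
    intro h0
    refine hne (funext fun i => Fin.ext ?_)
    have h3 : ((u i : ℕ) : ℤ) = ((u' i : ℕ) : ℤ) := congrFun (sub_eq_zero.1 h0) i
    exact_mod_cast h3
  have hvx : ‖evalv p x v‖ ≤ ((p : ℝ) ^ ((n + 1) * M))⁻¹ := by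
    have h3 : ev v ∈ RingHom.ker (PadicInt.toZModPow (p := p) ((n + 1) * M)) := by
      rw [RingHom.mem_ker, hv, hevsub, map_sub, sub_eq_zero]
      exact h1
    rw [PadicInt.ker_toZModPow, ← PadicInt.norm_le_pow_iff_mem_span_pow] at h3
    rwa [zpow_neg, zpow_natCast, PadicInt.norm_def, hev] at h3
  have hvlt : ∀ i, (v i).natAbs < p ^ (M + f) := by
    intro i
    have h3 := (u i).2
    have h4 := (u' i).2
    simp only [hv, Pi.sub_apply, toZ]
    omega
  have hshort : ∀ k, (v (i₀.succAbove k)).natAbs ≤ p ^ (M - g) := by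
    intro k
    have h3 : (u (i₀.succAbove k) : ℕ) / p ^ (M - g) = (u' (i₀.succAbove k) : ℕ) / p ^ (M - g) :=
      congrArg Fin.val (congrFun h2 k)
    exact natAbs_sub_le_of_div_eq (hppos _) h3
  refine ⟨v, hvx, nrm_le_iff.2 fun i => (hvlt i).le, fun hsum => ?_⟩
  -- a vector in the kernel of the functional is too short
  have hlong : (v i₀).natAbs ≤ n * p ^ (M - g) := by
    rw [Fin.sum_univ_succAbove _ i₀] at hsum
    have h3 : |a i₀| * |(v i₀ : ℚ)| ≤ |a i₀| * (n * (p : ℚ) ^ (M - g)) := by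
      rw [← abs_mul, eq_neg_of_add_eq_zero_left hsum, abs_neg]
      refine (Finset.abs_sum_le_sum_abs _ _).trans ?_
      calc _ ≤ ∑ k : Fin n, |a i₀| * (p : ℚ) ^ (M - g) := by
            refine Finset.sum_le_sum fun k _ => ?_
            rw [abs_mul]
            refine mul_le_mul (hi₀ _ (Finset.mem_univ _)) ?_ (abs_nonneg _) (abs_nonneg _)
            rw [← Int.cast_abs, Int.abs_eq_natAbs]
            exact_mod_cast hshort k
        _ = _ := by simp; ring
    have h4 := le_of_mul_le_mul_left h3 hai₀
    rw [← Int.cast_abs, Int.abs_eq_natAbs] at h4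
    exact_mod_cast h4
  have hnrm : nrm v ≤ n * p ^ (M - g) := by
    refine nrm_le_iff.2 fun i => ?_
    rcases Fin.eq_self_or_eq_succAbove i₀ i with rfl | ⟨k, rfl⟩
    · exact hlong
    · exact (hshort k).trans (Nat.le_mul_of_pos_left _ hn)
  have h3 := hgood v hv0 hvx
  have h4 : D * nrm v < p ^ M := by
    calc D * nrm v ≤ D * (n * p ^ (M - g)) := Nat.mul_le_mul_left _ hnrm
      _ = n * D * p ^ (M - g) := by ring
      _ < p ^ g * p ^ (M - g) := Nat.mul_lt_mul_of_pos_right hg (hppos _)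
      _ = p ^ M := by rw [← pow_add]; congr 1; omega
  omega

/-- At a good point, the lattice `Λ_x` has `n + 1` independent vectors of length `O(p^M)`. -/
lemma exists_lattice_basis {n D g M : ℕ} (hn : 1 ≤ n) (hg : n * D < p ^ g) (hM : g ≤ M)
    {x : ℚ_[p]} (hx : ‖x‖ ≤ 1) (hgood : IsGood p n D M x) :
    ∃ v : Matrix (Fin (n + 1)) (Fin (n + 1)) ℤ, v.det ≠ 0 ∧
      (∀ i, ‖evalv p x (v i)‖ ≤ ((p : ℝ) ^ ((n + 1) * M))⁻¹) ∧
      ∀ i, nrm (v i) ≤ p ^ (M + (g * n + 1)) := by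
  let S : Set (Fin (n + 1) → ℚ) := {w | ∃ v : Fin (n + 1) → ℤ, w = castQ _ v ∧
    ‖evalv p x v‖ ≤ ((p : ℝ) ^ ((n + 1) * M))⁻¹ ∧ nrm v ≤ p ^ (M + (g * n + 1))}
  have htop : Submodule.span ℚ S = ⊤ := by
    by_contra hne
    obtain ⟨φ, hφ, hker⟩ := Submodule.exists_le_ker_of_lt_top _ (lt_top_iff_ne_top.2 hne)
    have hφsum : ∀ w, φ w = ∑ i, φ (Pi.single i 1) * w i := by
      intro w
      conv_lhs => rw [LinearMap.pi_apply_eq_sum_univ φ w]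
      refine Finset.sum_congr rfl fun i _ => ?_
      rw [smul_eq_mul, mul_comm]
      congr 2
      ext j
      simp [Pi.single_apply, eq_comm]
    obtain ⟨v, hv1, hv2, hv3⟩ := exists_lattice_vector p hn hg hM hx hgood
      (fun i => φ (Pi.single i 1)) (by
        intro h0
        refine hφ (LinearMap.ext fun w => ?_)
        rw [hφsum]
        simp [fun i => congrFun h0 i])
    refine hv3 ?_
    have := hker (Submodule.subset_span (⟨v, rfl, hv1, hv2⟩ : castQ _ v ∈ S))
    rw [LinearMap.mem_ker, hφsum] at this
    simpa using this
  obtain ⟨r, hr, f, hf, hfi⟩ : ∃ r, r = n + 1 ∧ ∃ f : Fin r → Fin (n + 1) → ℚ,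
      (∀ i, f i ∈ S) ∧ LinearIndependent ℚ f := by
    obtain ⟨f, hf, -, hfi⟩ := Submodule.exists_fun_fin_finrank_span_eq ℚ S
    exact ⟨_, by rw [htop]; simp, f, hf, hfi⟩
  subst hr
  choose v hv1 hv2 hv3 using hf
  refine ⟨Matrix.of v, fun h0 => ?_, hv2, hv3⟩
  have h1 : IsUnit ((Matrix.of v).map (Int.castRingHom ℚ)) := by
    rw [← Matrix.linearIndependent_rows_iff_isUnit]
    have h2 : ((Matrix.of v).map (Int.castRingHom ℚ)).row = f := by
      ext i k
      rw [hv1 i]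
      rfl
    rw [h2]
    exact hfi
  rw [Matrix.isUnit_iff_isUnit_det, isUnit_iff_ne_zero, ← RingHom.mapMatrix_apply,
    ← RingHom.map_det, h0] at h1
  exact h1 (map_zero _)

/-! ### Short vectors with prescribed residues -/

/-- The value at `x` of the derivative of the integer polynomial with coefficient vector `v`. -/
noncomputable def evald {d : ℕ} (x : ℚ_[p]) : (Fin d → ℤ) →ₗ[ℤ] ℚ_[p] :=
  Fintype.linearCombination ℤ (fun i : Fin d => ((i : ℕ) : ℚ_[p]) * x ^ ((i : ℕ) - 1))

lemma evald_apply {d : ℕ} (x : ℚ_[p]) (v : Fin d → ℤ) :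
    evald p x v = ∑ i, (v i : ℚ_[p]) * (((i : ℕ) : ℚ_[p]) * x ^ ((i : ℕ) - 1)) := by
  simp [evald, Fintype.linearCombination_apply]

/-- The determinant of the coefficients of `m + 2` polynomials of degree `≤ m + 1` does not change
when its first two columns are replaced by the values and the derivatives of the polynomials at a
point `x`. -/
lemma norm_det_le {m : ℕ} (U : Matrix (Fin (m + 2)) (Fin (m + 2)) ℤ) (x : ℚ_[p]) (s r : ℝ)
    (hs : 0 ≤ s) (hr : 0 ≤ r) (h0 : ∀ i, ‖evalv p x (U i)‖ ≤ s) (h1 : ∀ i, ‖evald p x (U i)‖ ≤ r) :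
    ‖(U.det : ℚ_[p])‖ ≤ s * r := by
  let Q : Matrix (Fin (m + 2)) (Fin (m + 2)) ℚ_[p] := Matrix.of fun k =>
    Fin.cons (x ^ (k : ℕ)) (Fin.cons (((k : ℕ) : ℚ_[p]) * x ^ ((k : ℕ) - 1))
      (fun j : Fin m => if k = j.succ.succ then 1 else 0))
  have hQ0 : ∀ k, Q k 0 = x ^ (k : ℕ) := fun k => rfl
  have hQ1 : ∀ k, Q k (Fin.succ 0) = ((k : ℕ) : ℚ_[p]) * x ^ ((k : ℕ) - 1) := fun k => rfl
  have hQ2 : ∀ k (j : Fin m), Q k j.succ.succ = if k = j.succ.succ then 1 else 0 := fun k j => rfl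
  have hQdet : Q.det = 1 := by
    rw [Matrix.det_of_isLowerTriangular]
    · rw [Fin.prod_univ_succ, Fin.prod_univ_succ, hQ0, hQ1]
      simp [hQ2]
    · intro k j hkj
      have hkj' : k < j := hkj
      revert hkj'
      refine Fin.cases ?_ (fun j => Fin.cases ?_ (fun j => ?_) j) j
      · intro h
        exact absurd h (Fin.not_lt_zero _)
      · intro h
        have : (k : ℕ) = 0 := by
          have : (k : ℕ) < 1 := h
          omega
        rw [hQ1, this]
        simp
      · intro h
        rw [hQ2, if_neg h.ne]
  let A : Matrix (Fin (m + 2)) (Fin (m + 2)) ℚ_[p] := U.map (Int.castRingHom ℚ_[p])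
  have hdet : (U.det : ℚ_[p]) = (A * Q).det := by
    rw [Matrix.det_mul, hQdet, mul_one]
    exact RingHom.map_det (Int.castRingHom ℚ_[p]) U
  let c : Fin (m + 2) → ℝ := Fin.cons s (Fin.cons r fun _ => 1)
  have hc : ∀ i k, ‖(A * Q) i k‖ ≤ c k := by
    intro i
    refine Fin.cases ?_ (Fin.cases ?_ fun k => ?_)
    · change ‖(A * Q) i 0‖ ≤ s
      convert h0 i using 2
      rw [evalv_apply, Matrix.mul_apply]
      rfl
    · change ‖(A * Q) i (Fin.succ 0)‖ ≤ r
      convert h1 i using 2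
      rw [evald_apply, Matrix.mul_apply]
      rfl
    · rw [Matrix.mul_apply, Finset.sum_eq_single k.succ.succ]
      · rw [hQ2, if_pos rfl, mul_one]
        exact Padic.norm_int_le_one _
      · intro j _ hj
        rw [hQ2, if_neg hj, mul_zero]
      · simp
  have hprod : ∏ k, c k = s * r := by
    rw [Fin.prod_univ_succ, Fin.prod_univ_succ]
    simp [c]
  rw [hdet, Matrix.det_apply]
  refine IsUltrametricDist.norm_sum_le_of_forall_le_of_nonneg (by positivity) fun σ _ => ?_
  rw [← hprod]
  have h2 : ‖∏ k, (A * Q) (σ k) k‖ ≤ ∏ k, c k := by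
    rw [norm_prod]
    exact Finset.prod_le_prod (fun _ _ => norm_nonneg _) fun k _ => hc _ _
  rcases Int.units_eq_one_or (Equiv.Perm.sign σ) with h | h <;> rw [h] <;> simpa using h2

/-- A bound for the quotient of a determinant of `n + 1` short vectors of `Λ_x` by the covolume of
`Λ_x`, when the vectors have length at most `p^(M + f)`. -/
def detBound (n f : ℕ) : ℕ := (n + 1).factorial * p ^ (f * (n + 1))

lemma detBound_pos (n f : ℕ) : 0 < detBound p n f :=
  mul_pos (Nat.factorial_pos _) (pow_pos (Fact.out : p.Prime).pos _)

lemma natAbs_det_le {n f M : ℕ} (U : Matrix (Fin (n + 1)) (Fin (n + 1)) ℤ)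
    (h2 : ∀ i, nrm (U i) ≤ p ^ (M + f)) :
    U.det.natAbs ≤ detBound p n f * p ^ ((n + 1) * M) := by
  have := Matrix.det_le (A := U) (abv := AbsoluteValue.abs) (x := ((p ^ (M + f) : ℕ) : ℤ))
    (fun i j => by
      change |U i j| ≤ _
      rw [Int.abs_eq_natAbs]
      exact_mod_cast (natAbs_le_nrm (U i) j).trans (h2 i))
  change |U.det| ≤ _ at this
  rw [Int.abs_eq_natAbs] at this
  have h3 : U.det.natAbs ≤ (n + 1).factorial * (p ^ (M + f)) ^ (n + 1) := by
    simp only [Fintype.card_fin, nsmul_eq_mul] at this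
    exact_mod_cast this
  refine h3.trans (le_of_eq ?_)
  unfold detBound
  rw [← pow_mul, mul_assoc, ← pow_add]
  congr 2
  ring

/-- Among `n + 1` independent short vectors of `Λ_x` there is one whose derivative at `x` is bounded
below. -/
lemma exists_large_deriv {n f M : ℕ} (hn : 1 ≤ n) (U : Matrix (Fin (n + 1)) (Fin (n + 1)) ℤ)
    (hdet : U.det ≠ 0) (x : ℚ_[p]) (h0 : ∀ i, ‖evalv p x (U i)‖ ≤ ((p : ℝ) ^ ((n + 1) * M))⁻¹)
    (h2 : ∀ i, nrm (U i) ≤ p ^ (M + f)) :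
    ∃ i, ((detBound p n f : ℕ) : ℝ)⁻¹ ≤ ‖evald p x (U i)‖ := by
  by_contra! hcon
  obtain ⟨m, rfl⟩ : ∃ m, n = m + 1 := ⟨n - 1, by omega⟩
  have hC : (0 : ℝ) < (detBound p (m + 1) f : ℕ) := by exact_mod_cast detBound_pos p _ _
  have hp := pow_pos (p_pos p) ((m + 1 + 1) * M)
  have h3 : ‖fun i => evald p x (U i)‖ < ((detBound p (m + 1) f : ℕ) : ℝ)⁻¹ :=
    (pi_norm_lt_iff (inv_pos.2 hC)).2 hcon
  have h4 := norm_det_le p U x _ _ (inv_nonneg.2 hp.le) (norm_nonneg _) h0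
    (fun i => norm_le_pi_norm (fun i => evald p x (U i)) i)
  have h5 := one_le_abs_mul_norm p hdet
  have h6 : |(U.det : ℝ)| ≤ (detBound p (m + 1) f : ℕ) * (p : ℝ) ^ ((m + 1 + 1) * M) := by
    rw [← Int.cast_abs, Int.abs_eq_natAbs]
    exact_mod_cast natAbs_det_le p U h2
  have h7 : |(U.det : ℝ)| * ‖(U.det : ℚ_[p])‖ < 1 := by
    calc _ ≤ (detBound p (m + 1) f : ℕ) * (p : ℝ) ^ ((m + 1 + 1) * M) *
          (((p : ℝ) ^ ((m + 1 + 1) * M))⁻¹ * ‖fun i => evald p x (U i)‖) := by gcongr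
      _ = (detBound p (m + 1) f : ℕ) * ‖fun i => evald p x (U i)‖ := by field_simp
      _ < (detBound p (m + 1) f : ℕ) * ((detBound p (m + 1) f : ℕ) : ℝ)⁻¹ := by gcongr
      _ = 1 := mul_inv_cancel₀ hC.ne'
  linarith

/-- The index of the lattice spanned by short independent vectors of `Λ_x` is not divisible by a
prime `q ≠ p` that exceeds `detBound`. -/
lemma not_dvd_det {n f M q : ℕ} (hq : q.Prime) (hqp : q ≠ p) (hqC : detBound p n f < q)
    (U : Matrix (Fin (n + 1)) (Fin (n + 1)) ℤ)
    (hdet : U.det ≠ 0) (x : ℚ_[p]) (h0 : ∀ i, ‖evalv p x (U i)‖ ≤ ((p : ℝ) ^ ((n + 1) * M))⁻¹)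
    (h2 : ∀ i, nrm (U i) ≤ p ^ (M + f)) : ¬ (q : ℤ) ∣ U.det := by
  have h3 : ‖(U.det : ℚ_[p])‖ ≤ ((p : ℝ) ^ ((n + 1) * M))⁻¹ := by
    have h4 : (U.det : ℚ_[p]) = ∑ i, (U.adjugate 0 i : ℚ_[p]) * evalv p x (U i) := by
      have h5 : U.det • (Pi.single 0 1 : Fin (n + 1) → ℤ) = ∑ i, U.adjugate 0 i • U i := by
        ext k
        have := congrFun (congrFun (Matrix.adjugate_mul U) 0) k
        rw [Matrix.mul_apply] at this
        rw [Finset.sum_apply]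
        simp only [Pi.smul_apply, smul_eq_mul]
        rw [this, Matrix.smul_apply, Matrix.one_apply, smul_eq_mul, Pi.single_apply]
        simp only [eq_comm]
      have h6 : U.det • evalv p x (Pi.single 0 1 : Fin (n + 1) → ℤ) =
          ∑ i, (U.adjugate 0 i : ℤ) • evalv p x (U i) := by
        rw [← map_smul, h5, map_sum]
        exact Finset.sum_congr rfl fun i _ => map_smul _ _ _
      simp only [zsmul_eq_mul] at h6
      rw [← h6, evalv_apply, Finset.sum_eq_single 0]
      · simp
      · intro i _ hi
        simp [hi]
      · simp
    rw [h4]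
    have hp := p_pos p
    refine IsUltrametricDist.norm_sum_le_of_forall_le_of_nonneg (by positivity) fun i _ => ?_
    rw [norm_mul]
    exact (mul_le_of_le_one_left (norm_nonneg _) (Padic.norm_int_le_one _)).trans (h0 i)
  rw [← zpow_natCast, ← zpow_neg, Padic.norm_int_le_pow_iff_dvd] at h3
  obtain ⟨D, hD⟩ := h3
  have hN : 0 < p ^ ((n + 1) * M) := pow_pos (Fact.out : p.Prime).pos _
  have hD0 : D ≠ 0 := by
    rintro rfl
    exact hdet (by rw [hD, mul_zero])
  have hDle : D.natAbs ≤ detBound p n f := by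
    have h5 := natAbs_det_le p U h2
    rw [hD, Int.natAbs_mul, mul_comm] at h5
    refine Nat.le_of_mul_le_mul_right (h5.trans_eq' ?_) hN
    simp [Int.natAbs_pow]
  intro hdvd
  rw [hD] at hdvd
  rcases (Nat.prime_iff_prime_int.1 hq).dvd_or_dvd hdvd with h | h
  · have h6 := (Nat.prime_iff_prime_int.1 hq).dvd_of_dvd_pow h
    rw [Int.natCast_dvd_natCast] at h6
    exact hqp ((Nat.prime_dvd_prime_iff_eq hq Fact.out).1 h6)
  · have h6 : q ≤ D.natAbs := Nat.le_of_dvd (Int.natAbs_pos.2 hD0) (Int.natCast_dvd.1 h)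
    omega

lemma nrm_sum_le {d j : ℕ} (t : Fin j → ℤ) (v : Fin j → Fin d → ℤ) (A B : ℕ)
    (ht : ∀ i, (t i).natAbs ≤ A) (hv : ∀ i, nrm (v i) ≤ B) :
    nrm (∑ i, t i • v i) ≤ j * (A * B) := by
  refine nrm_le_iff.2 fun k => ?_
  rw [Finset.sum_apply]
  refine (Int.natAbs_sum_le _ _).trans ?_
  calc _ ≤ ∑ i : Fin j, A * B := by
        refine Finset.sum_le_sum fun i _ => ?_
        rw [Pi.smul_apply, smul_eq_mul, Int.natAbs_mul]
        exact Nat.mul_le_mul (ht i) ((natAbs_le_nrm _ k).trans (hv i))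
    _ = _ := by simp

/-- A short vector of `Λ_x` with large derivative at `x` whose coefficients are congruent to those
of `X ^ n + q` modulo `q ^ 2`. -/
lemma exists_eisenstein_vector {n f M q : ℕ} (hn : 1 ≤ n) (hq : q.Prime) (hqp : q ≠ p)
    (hqC : detBound p n f < q) (U : Matrix (Fin (n + 1)) (Fin (n + 1)) ℤ)
    (hdet : U.det ≠ 0) (x : ℚ_[p]) (h0 : ∀ i, ‖evalv p x (U i)‖ ≤ ((p : ℝ) ^ ((n + 1) * M))⁻¹)
    (h2 : ∀ i, nrm (U i) ≤ p ^ (M + f)) :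
    ∃ w : Fin (n + 1) → ℤ, ‖evalv p x w‖ ≤ ((p : ℝ) ^ ((n + 1) * M))⁻¹ ∧
      ((detBound p n f : ℕ) : ℝ)⁻¹ ≤ ‖evald p x w‖ ∧
      nrm w ≤ (n + 2) * q ^ 2 * p ^ (M + f) ∧
      ∀ k, w k ≡ (Pi.single 0 (q : ℤ) + Pi.single (Fin.last n) 1 : Fin (n + 1) → ℤ) k
        [ZMOD (q : ℤ) ^ 2] := by
  have hndvd := not_dvd_det p hq hqp hqC U hdet x h0 h2
  obtain ⟨i₀, hi₀⟩ := exists_large_deriv p hn U hdet x h0 h2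
  set c : Fin (n + 1) → ℤ := Pi.single 0 (q : ℤ) + Pi.single (Fin.last n) 1 with hc
  have hcop : IsCoprime U.det ((q : ℤ) ^ 2) :=
    (((Nat.prime_iff_prime_int.1 hq).coprime_iff_not_dvd.2 hndvd).symm).pow_right
  obtain ⟨D', b, hD'⟩ := hcop
  have hq2 : (0 : ℤ) < (q : ℤ) ^ 2 := by have := hq.pos; positivity
  let t : Fin (n + 1) → ℤ := fun i => (D' * (Matrix.vecMul c U.adjugate) i) % (q : ℤ) ^ 2
  have ht : ∀ i, (t i).natAbs ≤ q ^ 2 := by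
    intro i
    have h3 := Int.emod_nonneg (D' * (Matrix.vecMul c U.adjugate) i) hq2.ne'
    have h4 := Int.emod_lt_of_pos (D' * (Matrix.vecMul c U.adjugate) i) hq2
    zify
    rw [abs_of_nonneg h3]
    exact h4.le
  let w := ∑ i, t i • U i
  have hw : ∀ k, w k ≡ c k [ZMOD (q : ℤ) ^ 2] := by
    intro k
    have h3 : ∑ i, D' * (Matrix.vecMul c U.adjugate) i * U i k = D' * U.det * c k := by
      have h4 : (Matrix.vecMul (Matrix.vecMul c U.adjugate) U) k = U.det * c k := by
        rw [Matrix.vecMul_vecMul, Matrix.adjugate_mul, Matrix.vecMul_smul, Matrix.vecMul_one]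
        rfl
      rw [mul_assoc, ← h4, Matrix.vecMul, dotProduct, Finset.mul_sum]
      exact Finset.sum_congr rfl fun i _ => mul_assoc _ _ _
    have h4 : w k ≡ D' * U.det * c k [ZMOD (q : ℤ) ^ 2] := by
      rw [← h3]
      simp only [w, Finset.sum_apply, Pi.smul_apply, smul_eq_mul]
      refine Int.ModEq.sum fun i _ => ?_
      exact (Int.mod_modEq _ _).mul_right _
    refine h4.trans ?_
    have h5 : D' * U.det = 1 - b * (q : ℤ) ^ 2 := by linarith
    rw [h5]
    refine (Int.modEq_iff_dvd.2 ⟨b * c k, by ring⟩)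
  have hwx : ‖evalv p x w‖ ≤ ((p : ℝ) ^ ((n + 1) * M))⁻¹ := by
    have hp := p_pos p
    rw [map_sum]
    refine IsUltrametricDist.norm_sum_le_of_forall_le_of_nonneg (by positivity) fun i _ => ?_
    rw [map_smul, zsmul_eq_mul, norm_mul]
    exact (mul_le_of_le_one_left (norm_nonneg _) (Padic.norm_int_le_one _)).trans (h0 i)
  have hwn : nrm w ≤ (n + 1) * (q ^ 2 * p ^ (M + f)) := nrm_sum_le t _ _ _ ht h2
  by_cases hwd : ((detBound p n f : ℕ) : ℝ)⁻¹ ≤ ‖evald p x w‖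
  · exact ⟨w, hwx, hwd, hwn.trans (by nlinarith [Nat.zero_le (q ^ 2 * p ^ (M + f))]), hw⟩
  · -- the derivative becomes large after adding `q ^ 2` times a suitable vector
    rw [not_le] at hwd
    have hqn : ‖((q : ℤ) ^ 2 : ℤ) • evald p x (U i₀)‖ = ‖evald p x (U i₀)‖ := by
      rw [zsmul_eq_mul, norm_mul]
      have : ‖(q : ℚ_[p])‖ = 1 := by
        rw [Padic.norm_natCast_eq_one_iff]
        exact (Nat.coprime_primes Fact.out hq).2 hqp.symm
      push_cast
      rw [norm_pow, this, one_pow, one_mul]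
    refine ⟨w + ((q : ℤ) ^ 2 : ℤ) • U i₀, ?_, ?_, ?_, ?_⟩
    · rw [map_add, map_smul]
      refine (IsUltrametricDist.norm_add_le_max _ _).trans (max_le hwx ?_)
      rw [zsmul_eq_mul, norm_mul]
      exact (mul_le_of_le_one_left (norm_nonneg _) (Padic.norm_int_le_one _)).trans (h0 i₀)
    · rw [map_add, map_smul, IsUltrametricDist.norm_add_eq_max_of_norm_ne_norm, hqn]
      · exact le_max_of_le_right hi₀
      · rw [hqn]
        exact (hwd.trans_le hi₀).ne
    · refine nrm_le_iff.2 fun k => ?_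
      rw [Pi.add_apply, Pi.smul_apply, smul_eq_mul]
      refine (Int.natAbs_add_le _ _).trans ?_
      rw [Int.natAbs_mul, Int.natAbs_pow, Int.natAbs_natCast]
      have h3 := (natAbs_le_nrm w k).trans hwn
      have h4 : q ^ 2 * (U i₀ k).natAbs ≤ q ^ 2 * p ^ (M + f) :=
        Nat.mul_le_mul_left _ ((natAbs_le_nrm (U i₀) k).trans (h2 i₀))
      calc _ ≤ _ := add_le_add h3 h4
        _ = _ := by ring
    · intro k
      refine Int.ModEq.trans ?_ (hw k)
      exact Int.modEq_iff_dvd.2 ⟨-U i₀ k, by simp⟩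

/-! ### Roots and irreducibility -/

/-- The integer polynomial with coefficient vector `w`. -/
noncomputable def polyOf {d : ℕ} (w : Fin d → ℤ) : Polynomial ℤ :=
  ∑ i, Polynomial.C (w i) * Polynomial.X ^ (i : ℕ)

lemma coeff_polyOf {d : ℕ} (w : Fin d → ℤ) (i : Fin d) : (polyOf w).coeff i = w i := by
  simp only [polyOf, Polynomial.finsetSum_coeff, Polynomial.coeff_C_mul, Polynomial.coeff_X_pow]
  rw [Finset.sum_eq_single i]
  · simp
  · intro j _ hj
    have : (i : ℕ) ≠ j := fun h => hj (Fin.ext h.symm)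
    simp [this]
  · simp

lemma degree_polyOf_lt {d : ℕ} (w : Fin d → ℤ) : (polyOf w).degree < d :=
  Polynomial.degree_sum_fin_lt _

lemma aeval_polyOf {d : ℕ} (w : Fin d → ℤ) (x : ℚ_[p]) :
    Polynomial.aeval x (polyOf w) = evalv p x w := by
  simp [polyOf, evalv_apply]

lemma aeval_derivative_polyOf {d : ℕ} (w : Fin d → ℤ) (x : ℚ_[p]) :
    Polynomial.aeval x (Polynomial.derivative (polyOf w)) = evald p x w := by
  simp [polyOf, evald_apply, Polynomial.derivative_X_pow]

/-- A polynomial that is small at an integer point `a` with derivative bounded below has a root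
close to `a`. -/
lemma exists_root_near (P : Polynomial ℤ) (a : ℤ_[p]) (N C : ℝ) (hC : 0 < C) (hN0 : 0 < N)
    (hN : C ^ 2 < N) (h0 : ‖Polynomial.aeval a P‖ ≤ N⁻¹)
    (h1 : C⁻¹ ≤ ‖Polynomial.aeval a (Polynomial.derivative P)‖) :
    ∃ z : ℤ_[p], Polynomial.aeval z P = 0 ∧ ‖z - a‖ ≤ C * N⁻¹ := by
  set D := Polynomial.aeval a (Polynomial.derivative P) with hD
  have hDpos : 0 < ‖D‖ := (inv_pos.2 hC).trans_le h1
  have h2 : ‖Polynomial.aeval a P‖ < ‖D‖ ^ 2 := by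
    calc _ ≤ N⁻¹ := h0
      _ < (C ^ 2)⁻¹ := inv_strictAnti₀ (by positivity) hN
      _ = C⁻¹ ^ 2 := (inv_pow _ _).symm
      _ ≤ _ := by gcongr
  obtain ⟨z, hz, hza, -⟩ := hensels_lemma h2
  refine ⟨z, hz, ?_⟩
  obtain ⟨k, hk⟩ := Polynomial.binomExpansion (P.map (Int.castRingHom ℤ_[p])) a (z - a)
  rw [add_sub_cancel, Polynomial.derivative_map] at hk
  have he : ∀ (F : Polynomial ℤ) (y : ℤ_[p]),
      (F.map (Int.castRingHom ℤ_[p])).eval y = Polynomial.aeval y F := by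
    intro F y
    rw [Polynomial.eval_map, Polynomial.aeval_def]
    rfl
  rw [he, he, he, hz, ← hD] at hk
  -- the quadratic term of the Taylor expansion is dominated by the linear one
  rcases eq_or_ne z a with rfl | hne
  · rw [sub_self, norm_zero]
    positivity
  have hpos : 0 < ‖z - a‖ := norm_pos_iff.2 (sub_ne_zero.2 hne)
  have h3 : ‖k * (z - a) ^ 2‖ < ‖D * (z - a)‖ := by
    rw [norm_mul, norm_mul, norm_pow]
    calc _ ≤ 1 * ‖z - a‖ ^ 2 := by gcongr; exact PadicInt.norm_le_one k
      _ = ‖z - a‖ * ‖z - a‖ := by ring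
      _ < _ := by gcongr
  have h4 : ‖D * (z - a) + k * (z - a) ^ 2‖ = ‖D * (z - a)‖ := by
    rw [IsUltrametricDist.norm_add_eq_max_of_norm_ne_norm h3.ne', max_eq_left h3.le]
  have h5 : D * (z - a) + k * (z - a) ^ 2 = - Polynomial.aeval a P := by
    rw [eq_neg_iff_add_eq_zero, add_comm, ← add_assoc]
    exact hk.symm
  rw [h5, norm_neg, norm_mul] at h4
  have h6 : C⁻¹ * ‖z - a‖ ≤ N⁻¹ := by
    calc _ ≤ ‖D‖ * ‖z - a‖ := by gcongr
      _ ≤ _ := h4 ▸ h0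
  rwa [inv_mul_le_iff₀ hC] at h6

/-- The Eisenstein condition at the prime `q` in degree `n`. -/
def IsEis (q n : ℕ) (P : Polynomial ℤ) : Prop :=
  P.natDegree = n ∧ ¬ (q : ℤ) ∣ P.coeff n ∧ (∀ i < n, (q : ℤ) ∣ P.coeff i) ∧
    ¬ (q : ℤ) ^ 2 ∣ P.coeff 0

lemma isEis_polyOf {q n : ℕ} (hn : 1 ≤ n) (hq : q.Prime) (w : Fin (n + 1) → ℤ)
    (hw : ∀ k, w k ≡ (Pi.single 0 (q : ℤ) + Pi.single (Fin.last n) 1 : Fin (n + 1) → ℤ) k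
        [ZMOD (q : ℤ) ^ 2]) : IsEis q n (polyOf w) := by
  have hqZ := Nat.prime_iff_prime_int.1 hq
  have h0n : (0 : Fin (n + 1)) ≠ Fin.last n := by
    intro h
    have := congrArg Fin.val h
    simp at this
    omega
  have hmod : ∀ k, w k ≡ (Pi.single 0 (q : ℤ) + Pi.single (Fin.last n) 1 : Fin (n + 1) → ℤ) k
      [ZMOD (q : ℤ)] := fun k => (hw k).of_dvd (dvd_pow_self _ two_ne_zero)
  have hlast : ¬ (q : ℤ) ∣ (polyOf w).coeff n := by
    have h1 : (polyOf w).coeff n = w (Fin.last n) := coeff_polyOf w (Fin.last n)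
    rw [h1, (hmod (Fin.last n)).dvd_iff]
    simpa [h0n, h0n.symm] using hqZ.not_dvd_one
  refine ⟨?_, hlast, fun i hi => ?_, ?_⟩
  · refine le_antisymm ?_ (Polynomial.le_natDegree_of_ne_zero fun h => hlast (h ▸ dvd_zero _))
    refine Polynomial.natDegree_le_of_degree_le (Polynomial.degree_le_of_natDegree_le ?_)
    have h1 := degree_polyOf_lt w
    rw [Polynomial.degree_lt_iff_coeff_zero] at h1
    exact Polynomial.natDegree_le_iff_coeff_eq_zero.2 fun m hm => h1 m hm
  · have h1 : (polyOf w).coeff i = w ⟨i, by omega⟩ := coeff_polyOf w ⟨i, by omega⟩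
    have h2 : (⟨i, by omega⟩ : Fin (n + 1)) ≠ Fin.last n := by
      intro h
      have := congrArg Fin.val h
      simp at this
      omega
    rw [h1, (hmod _).dvd_iff, Pi.add_apply, Pi.single_eq_of_ne h2, add_zero, Pi.single_apply]
    split_ifs <;> simp
  · have h1 : (polyOf w).coeff 0 = w 0 := coeff_polyOf w 0
    rw [h1, (hw 0).dvd_iff, Pi.add_apply, Pi.single_eq_same, Pi.single_eq_of_ne h0n,
      add_zero, pow_two]
    intro h
    have h2 : (q : ℤ) ∣ 1 := by
      have := hqZ.ne_zero
      refine (mul_dvd_mul_iff_left this).1 ?_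
      simpa using h
    exact hqZ.not_dvd_one h2

lemma IsEis.comp_C_mul_X {q n : ℕ} {P : Polynomial ℤ} (h : IsEis q n P) {r : ℤ}
    (hq : Prime (q : ℤ)) (hr : ¬ (q : ℤ) ∣ r) :
    IsEis q n (P.comp (Polynomial.C r * Polynomial.X)) := by
  obtain ⟨h1, h2, h3, h4⟩ := h
  have hr0 : r ≠ 0 := fun h => hr (h ▸ dvd_zero _)
  refine ⟨?_, ?_, fun i hi => ?_, ?_⟩
  · rw [Polynomial.natDegree_comp, Polynomial.natDegree_C_mul_X _ hr0, mul_one, h1]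
  · rw [Polynomial.comp_C_mul_X_coeff]
    intro h
    rcases hq.dvd_or_dvd h with h | h
    · exact h2 h
    · exact hr (hq.dvd_of_dvd_pow h)
  · rw [Polynomial.comp_C_mul_X_coeff]
    exact Dvd.dvd.mul_right (h3 i hi) _
  · rw [Polynomial.comp_C_mul_X_coeff, pow_zero, mul_one]
    exact h4

/-- The primitive part of an Eisenstein polynomial is irreducible. -/
lemma IsEis.irreducible_primPart {q n : ℕ} (hn : 1 ≤ n) {P : Polynomial ℤ} (h : IsEis q n P)
    (hq : Prime (q : ℤ)) : Irreducible P.primPart := by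
  obtain ⟨h1, h2, h3, h4⟩ := h
  have hcoeff : ∀ i, P.coeff i = P.content * P.primPart.coeff i := by
    intro i
    conv_lhs => rw [P.eq_C_content_mul_primPart, Polynomial.coeff_C_mul]
  have hc : ¬ (q : ℤ) ∣ P.content := fun h => h2 (by rw [hcoeff]; exact Dvd.dvd.mul_right h _)
  have hprime : (Ideal.span {(q : ℤ)}).IsPrime := (Ideal.span_singleton_prime hq.ne_zero).2 hq
  refine Polynomial.IsEisensteinAt.irreducible (𝓟 := Ideal.span {(q : ℤ)}) ?_ hprime
    P.isPrimitive_primPart (by rw [Polynomial.natDegree_primPart]; omega)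
  refine ⟨?_, fun {i} hi => ?_, ?_⟩
  · rw [Ideal.mem_span_singleton, Polynomial.leadingCoeff, Polynomial.natDegree_primPart, h1]
    exact fun h => h2 (by rw [hcoeff]; exact Dvd.dvd.mul_left h _)
  · rw [Polynomial.natDegree_primPart, h1] at hi
    rw [Ideal.mem_span_singleton]
    have := h3 i hi
    rw [hcoeff] at this
    exact (hq.dvd_or_dvd this).resolve_left hc
  · rw [Ideal.span_singleton_pow, Ideal.mem_span_singleton]
    exact fun h => h4 (by rw [hcoeff]; exact Dvd.dvd.mul_left h _)

/-- Two irreducible integer polynomials of positive degree with a common root agree up to sign. -/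
lemma natAbs_coeff_eq_of_common_root {P R : Polynomial ℤ} (hP : Irreducible P) (hR : Irreducible R)
    (hP1 : P.natDegree ≠ 0) (hR1 : R.natDegree ≠ 0) {α : ℚ_[p]} (hPα : Polynomial.aeval α P = 0)
    (hRα : Polynomial.aeval α R = 0) (i : ℕ) : (P.coeff i).natAbs = (R.coeff i).natAbs := by
  have hPp := hP.isPrimitive hP1
  have hRp := hR.isPrimitive hR1
  have hPQ := (Polynomial.IsPrimitive.Int.irreducible_iff_irreducible_map_cast hPp).1 hP
  have hRQ := (Polynomial.IsPrimitive.Int.irreducible_iff_irreducible_map_cast hRp).1 hR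
  have hα : ∀ F : Polynomial ℤ, Polynomial.aeval α F = 0 →
      Polynomial.aeval α (F.map (Int.castRingHom ℚ)) = 0 := by
    intro F hF
    rw [← hF]
    exact Polynomial.aeval_map_algebraMap ℚ α F
  have hint : IsIntegral ℚ α := by
    rw [← isAlgebraic_iff_isIntegral]
    exact ⟨_, hPQ.ne_zero, hα P hPα⟩
  have h1 := (minpoly.irreducible hint).associated_of_dvd hPQ (minpoly.dvd ℚ α (hα P hPα))
  have h2 := (minpoly.irreducible hint).associated_of_dvd hRQ (minpoly.dvd ℚ α (hα R hRα))
  have h3 : P ∣ R :=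
    (Polynomial.IsPrimitive.Int.dvd_iff_map_cast_dvd_map_cast P R hPp).2 (h1.symm.trans h2).dvd
  obtain ⟨u, hu⟩ := hP.associated_of_dvd hR h3
  obtain ⟨r, hr, hru⟩ := Polynomial.isUnit_iff.1 u.isUnit
  rw [← hu, ← hru, Polynomial.coeff_mul_C, Int.natAbs_mul, Int.isUnit_iff_natAbs_eq.1 hr, mul_one]

/-- A root of an Eisenstein polynomial has degree `n`, and its height is at most that of the
polynomial: the minimal polynomial is the primitive part, up to sign. -/
lemma IsEis.isAlgOfDeg {q n B : ℕ} (hn : 1 ≤ n) {P : Polynomial ℤ} (h : IsEis q n P)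
    (hq : Prime (q : ℤ)) {α : ℚ_[p]} (hα : Polynomial.aeval α P = 0)
    (hB : ∀ i, (P.coeff i).natAbs ≤ B) :
    IsAlgOfDeg p n α ∧ ∀ R : Polynomial ℤ, R.natDegree = n → Irreducible R →
      Polynomial.aeval α R = 0 → polyHeight R ≤ B := by
  have hirr := h.irreducible_primPart hn hq
  have hdeg : P.primPart.natDegree = n := by rw [Polynomial.natDegree_primPart, h.1]
  have hP0 : P ≠ 0 := by
    rintro rfl
    have := h.1
    simp at this
    omega
  have hαp : Polynomial.aeval α P.primPart = 0 := by
    have h1 := hα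
    rw [P.eq_C_content_mul_primPart, map_mul, Polynomial.aeval_C] at h1
    refine (mul_eq_zero.1 h1).resolve_left ?_
    rw [eq_intCast, Int.cast_eq_zero, Polynomial.content_eq_zero_iff]
    exact hP0
  refine ⟨⟨_, hdeg, hirr, hαp⟩, fun R hR hRirr hRα => Finset.sup_le fun i _ => ?_⟩
  rw [natAbs_coeff_eq_of_common_root p hRirr hirr (by omega) (by omega) hRα hαp]
  refine le_trans ?_ (hB i)
  conv_rhs => rw [P.eq_C_content_mul_primPart, Polynomial.coeff_C_mul, Int.natAbs_mul]
  refine Nat.le_mul_of_pos_left _ (Int.natAbs_pos.2 ?_)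
  rw [Ne, Polynomial.content_eq_zero_iff]
  exact hP0

/-! ### Algebraic numbers near good points -/

/-- A good point has, within a bounded multiple of `p^{-(n+1)M}`, an algebraic number of degree `n`
and height `O(p^M)`. Points are scaled into `ℤ_[p]` by `p ^ s`. -/
lemma exists_algebraic_near {n D g M q : ℕ} (hn : 1 ≤ n) (hg : n * D < p ^ g) (hM : g ≤ M)
    (hq : q.Prime) (hqp : q ≠ p) (hqC : detBound p n (g * n + 1) < q)
    (hC : ((detBound p n (g * n + 1) : ℕ) : ℝ) ^ 2 < (p : ℝ) ^ ((n + 1) * M)) (s : ℕ) (y : ℚ_[p])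
    (hy : ‖(p : ℚ_[p]) ^ s * y‖ ≤ 1) (hgood : IsGood p n D M ((p : ℚ_[p]) ^ s * y)) :
    ∃ α : ℚ_[p], IsAlgOfDeg p n α ∧
      (∀ R : Polynomial ℤ, R.natDegree = n → Irreducible R → Polynomial.aeval α R = 0 →
        polyHeight R ≤ (n + 2) * q ^ 2 * p ^ (M + (g * n + 1)) * p ^ (s * n)) ∧
      ‖(p : ℚ_[p]) ^ s * α - (p : ℚ_[p]) ^ s * y‖ ≤
        ((detBound p n (g * n + 1) : ℕ) : ℝ) * ((p : ℝ) ^ ((n + 1) * M))⁻¹ := by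
  have hp : p.Prime := Fact.out
  have hpQ : (p : ℚ_[p]) ≠ 0 := Nat.cast_ne_zero.2 hp.ne_zero
  obtain ⟨U, hdet, hU0, hU1⟩ := exists_lattice_basis p hn hg hM hy hgood
  obtain ⟨w, hw0, hw1, hwn, hwm⟩ :=
    exists_eisenstein_vector p hn hq hqp hqC U hdet _ hU0 hU1
  obtain ⟨x, hx⟩ : ∃ x : ℤ_[p], (x : ℚ_[p]) = (p : ℚ_[p]) ^ s * y := ⟨⟨_, hy⟩, rfl⟩
  rw [← hx] at hw0 hw1
  have hcoe : ∀ (F : Polynomial ℤ) (z : ℤ_[p]),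
      Polynomial.aeval (z : ℚ_[p]) F = ((Polynomial.aeval z F : ℤ_[p]) : ℚ_[p]) :=
    fun F z => Polynomial.aeval_algebraMap_apply ℚ_[p] z F
  rw [← aeval_polyOf, hcoe, ← PadicInt.norm_def] at hw0
  rw [← aeval_derivative_polyOf, hcoe, ← PadicInt.norm_def] at hw1
  obtain ⟨z, hz0, hz⟩ := exists_root_near p (polyOf w) x ((p : ℝ) ^ ((n + 1) * M))
    (detBound p n (g * n + 1) : ℕ) (Nat.cast_pos.2 (detBound_pos p n _)) (pow_pos (p_pos p) _)
    hC hw0 hw1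
  have hqZ := Nat.prime_iff_prime_int.1 hq
  have hr : ¬ (q : ℤ) ∣ (p : ℤ) ^ s := by
    intro h
    have h1 := hqZ.dvd_of_dvd_pow h
    exact hqp ((Nat.prime_dvd_prime_iff_eq hq hp).1 (Int.natCast_dvd_natCast.1 h1))
  have heis := (isEis_polyOf hn hq w hwm).comp_C_mul_X hqZ hr
  have hsz : (p : ℚ_[p]) ^ s * ((p : ℚ_[p]) ^ (-s : ℤ) * z) = z := by
    rw [← mul_assoc, ← zpow_natCast, ← zpow_add₀ hpQ]
    simp
  have hroot : Polynomial.aeval ((p : ℚ_[p]) ^ (-s : ℤ) * z)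
      ((polyOf w).comp (Polynomial.C ((p : ℤ) ^ s) * Polynomial.X)) = 0 := by
    rw [Polynomial.aeval_comp, map_mul, Polynomial.aeval_X, Polynomial.aeval_C]
    have h1 : (algebraMap ℤ ℚ_[p]) ((p : ℤ) ^ s) = (p : ℚ_[p]) ^ s := by simp
    rw [h1, hsz, hcoe, hz0]
    rfl
  have hcoeff : ∀ i, (((polyOf w).comp (Polynomial.C ((p : ℤ) ^ s) * Polynomial.X)).coeff
      i).natAbs ≤ (n + 2) * q ^ 2 * p ^ (M + (g * n + 1)) * p ^ (s * n) := by
    intro i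
    rw [Polynomial.comp_C_mul_X_coeff]
    by_cases hi : i < n + 1
    · have h1 : (polyOf w).coeff i = w ⟨i, hi⟩ := coeff_polyOf w ⟨i, hi⟩
      rw [h1, Int.natAbs_mul]
      refine Nat.mul_le_mul (nrm_le_iff.1 hwn _) ?_
      rw [Int.natAbs_pow, Int.natAbs_pow, Int.natAbs_natCast, ← pow_mul]
      exact Nat.pow_le_pow_right hp.pos (Nat.mul_le_mul_left _ (by omega))
    · have h1 : (polyOf w).coeff i = 0 := by
        have h2 := degree_polyOf_lt w
        rw [Polynomial.degree_lt_iff_coeff_zero] at h2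
        exact h2 i (by omega)
      rw [h1]
      simp
  obtain ⟨h1, h2⟩ := heis.isAlgOfDeg p hn hqZ hroot hcoeff
  refine ⟨_, h1, h2, ?_⟩
  rw [hsz, ← hx, ← PadicInt.coe_sub, ← PadicInt.norm_def]
  exact hz

/-- Most points of a ball are good, after scaling by `p ^ s`. -/
lemma measure_not_good_le [MeasurableSpace ℚ_[p]] [BorelSpace ℚ_[p]] (μ : Measure ℚ_[p])
    [μ.IsAddHaarMeasure] {n e : ℕ} (he : 2 * ((n + 1) * (n * p)) ≤ p ^ e) (s : ℕ) (a : ℚ_[p])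
    (k : ℤ) : ∃ M₀ : ℕ, ∀ M ≥ M₀,
      μ {y ∈ cball p a k | ¬ IsGood p n ((n + 1) * p ^ (e * n)) M ((p : ℚ_[p]) ^ s * y)} ≤
        2⁻¹ * μ (cball p a k) := by
  have hp : p.Prime := Fact.out
  have hpQ : (p : ℚ_[p]) ^ s ≠ 0 := pow_ne_zero _ (Nat.cast_ne_zero.2 hp.ne_zero)
  let L : ℚ_[p] ≃+ ℚ_[p] :=
    { Equiv.mulLeft₀ ((p : ℚ_[p]) ^ s) hpQ with map_add' := fun x y => mul_add _ x y }
  have hL : Continuous L := continuous_const_mul ((p : ℚ_[p]) ^ s)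
  have hL' : Continuous L.symm := continuous_const_mul (((p : ℚ_[p]) ^ s)⁻¹)
  have hLapp : ∀ y, L y = (p : ℚ_[p]) ^ s * y := fun _ => rfl
  -- the pushforward of a Haar measure under multiplication by `p ^ s` is a Haar measure
  have := L.isAddHaarMeasure_map μ hL hL'
  obtain ⟨M₀, hM₀⟩ := measure_short_le p (μ.map L) n e ((p : ℚ_[p]) ^ s * a) (k + s)
  refine ⟨M₀, fun M hM => ?_⟩
  have hpre : L ⁻¹' (cball p ((p : ℚ_[p]) ^ s * a) (k + s)) = cball p a k := by
    ext y
    rw [Set.mem_preimage, hLapp, mem_cball, mem_cball, ← mul_sub, norm_mul, norm_pow,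
      Padic.norm_p, neg_add, zpow_add₀ (p_pos p).ne', mul_comm, zpow_neg _ (s : ℤ), zpow_natCast,
      inv_pow]
    exact mul_le_mul_iff_left₀ (inv_pos.2 (pow_pos (p_pos p) s))
  have h1 : μ {y ∈ cball p a k | ¬ IsGood p n ((n + 1) * p ^ (e * n)) M ((p : ℚ_[p]) ^ s * y)} ≤
      μ.map L {x ∈ cball p ((p : ℚ_[p]) ^ s * a) (k + s) | ∃ v : Fin (n + 1) → ℤ, v ≠ 0 ∧
        ‖evalv p x v‖ ≤ ((p : ℝ) ^ ((n + 1) * M))⁻¹ ∧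
        (n + 1) * (p : ℝ) ^ (e * n) * nrm v < (p : ℝ) ^ M} := by
    refine le_trans (measure_mono ?_) (Measure.le_map_apply hL.measurable.aemeasurable _)
    rintro y ⟨hy, hbad⟩
    refine ⟨?_, ?_⟩
    · rw [← hpre] at hy
      exact hy
    · simp only [IsGood, not_forall, not_le] at hbad
      obtain ⟨v, hv0, hv1, hv2⟩ := hbad
      refine ⟨v, hv0, hv1, ?_⟩
      exact_mod_cast hv2
  refine h1.trans ((hM₀ M hM).trans ?_)
  rw [Measure.map_apply hL.measurable (measurableSet_cball p _ _), hpre]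
  gcongr
  have hpe : ((p : ENNReal) ^ e) ≠ 0 := pow_ne_zero _ (Nat.cast_ne_zero.2 hp.ne_zero)
  have hpe' : ((p : ENNReal) ^ e) ≠ ⊤ := ENNReal.pow_ne_top (ENNReal.natCast_ne_top p)
  have h2 : ((n + 1 : ℕ) : ENNReal) * (n / (p : ENNReal) ^ e * p) =
      ((n + 1 : ℕ) * (n * p) : ENNReal) / (p : ENNReal) ^ e := by
    simp only [div_eq_mul_inv]
    ring
  rw [h2, ENNReal.div_le_iff hpe hpe', ← ENNReal.div_eq_inv_mul,
    ENNReal.le_div_iff_mul_le (by simp) (by simp), mul_comm]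
  exact_mod_cast he

/-! ### Counting separated algebraic numbers -/

/-- A bounded ball is scaled into the unit ball by a power of `p`. -/
lemma exists_scaling (a : ℚ_[p]) (k : ℤ) :
    ∃ s : ℕ, ∀ y ∈ cball p a k, ‖(p : ℚ_[p]) ^ s * y‖ ≤ 1 := by
  obtain ⟨s, hs⟩ := pow_unbounded_of_one_lt (max ((p : ℝ) ^ (-k)) ‖a‖) (one_lt_p p)
  refine ⟨s, fun y hy => ?_⟩
  have h1 : ‖y‖ ≤ max ((p : ℝ) ^ (-k)) ‖a‖ := by
    rw [mem_cball] at hy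
    have h2 := IsUltrametricDist.norm_add_le_max (y - a) a
    rw [sub_add_cancel] at h2
    exact h2.trans (max_le_max hy le_rfl)
  rw [norm_mul, norm_pow, Padic.norm_p, inv_pow, inv_mul_le_iff₀ (pow_pos (p_pos p) s), mul_one]
  exact h1.trans hs.le

/-- A set `E` that comes within `p^{-l}` of more than half of a ball contains many points that are
`p^{-l}`-separated. -/
lemma exists_separated [MeasurableSpace ℚ_[p]] [BorelSpace ℚ_[p]] (μ : Measure ℚ_[p])
    [μ.IsAddHaarMeasure] (a : ℚ_[p]) (k l : ℤ) (E bad : Set ℚ_[p])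
    (hbad : μ bad ≤ 2⁻¹ * μ (cball p a k))
    (hE : ∀ y ∈ cball p a k, y ∉ bad → ∃ α ∈ E, y ∈ cball p α l) (t : ℕ)
    (ht : ∀ c : ℕ, c < t →
      2 * (c * (μ (cball p 0 l)).toReal) < (μ (cball p a k)).toReal) :
    ∃ γ : Fin t → ℚ_[p], (∀ i, γ i ∈ E) ∧ ∀ i j, i ≠ j → (p : ℝ) ^ (-l) ≤ ‖γ i - γ j‖ := by
  rcases separated_or_covered p E l t with ⟨S, hS, hSE, hsep⟩ | ⟨S, hS, hcov⟩
  · let φ := S.equivFinOfCardEq hS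
    refine ⟨fun i => φ.symm i, fun i => hSE (φ.symm i).2, fun i j hij => ?_⟩
    have h1 := hsep _ (φ.symm j).2 _ (φ.symm i).2
      fun h => hij (φ.symm.injective (Subtype.ext h)).symm
    rw [mem_cball, not_le] at h1
    exact h1.le
  · exfalso
    have hsub : cball p a k ⊆ bad ∪ ⋃ b ∈ S, cball p b l := by
      intro y hy
      by_cases hyb : y ∈ bad
      · exact Or.inl hyb
      · obtain ⟨α, hα, hyα⟩ := hE y hy hyb
        have h1 := hcov hα
        simp only [Set.mem_iUnion] at h1
        obtain ⟨b, hb, hαb⟩ := h1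
        refine Or.inr (Set.mem_biUnion hb ?_)
        rw [← cball_eq p hαb]
        exact hyα
    have hle : μ (cball p a k) ≤ 2⁻¹ * μ (cball p a k) + S.card * μ (cball p 0 l) := by
      calc _ ≤ _ := measure_mono hsub
        _ ≤ μ bad + μ (⋃ b ∈ S, cball p b l) := measure_union_le _ _
        _ ≤ 2⁻¹ * μ (cball p a k) + ∑ b ∈ S, μ (cball p b l) :=
          add_le_add hbad (measure_biUnion_finset_le _ _)
        _ = _ := by
          simp_rw [measure_cball_zero p μ _ l]
          simp
    have h1 := (measure_cball_lt_top p μ a k).ne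
    have h2 := (measure_cball_lt_top p μ 0 l).ne
    have h3 : 2⁻¹ * μ (cball p a k) ≠ ⊤ := ENNReal.mul_ne_top (by simp) h1
    have h4 : (S.card : ENNReal) * μ (cball p 0 l) ≠ ⊤ :=
      ENNReal.mul_ne_top (ENNReal.natCast_ne_top _) h2
    have hle' := ENNReal.toReal_mono (ENNReal.add_ne_top.2 ⟨h3, h4⟩) hle
    rw [ENNReal.toReal_add h3 h4, ENNReal.toReal_mul, ENNReal.toReal_mul, ENNReal.toReal_inv,
      ENNReal.toReal_natCast, ENNReal.toReal_ofNat] at hle'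
    have := ht _ hS
    linarith

theorem stmt_18 [MeasurableSpace ℚ_[p]] [BorelSpace ℚ_[p]]
    (μ : Measure ℚ_[p]) [μ.IsAddHaarMeasure]
    (n : ℕ) (hn : 1 ≤ n)
    (Hgt : ℚ_[p] → ℕ)
    (hHgt : ∀ α : ℚ_[p], IsAlgOfDeg p n α →
      ∃ P : Polynomial ℤ, P.natDegree = n ∧ Irreducible P ∧
        Polynomial.aeval α P = 0 ∧ polyHeight P = Hgt α)
    (K₀ : Set ℚ_[p]) (hK₀ : IsPadicDisc p K₀) :
    IsRegularSystem p μ K₀ {α : ℚ_[p] | IsAlgOfDeg p n α}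
      (fun α => (Hgt α : ℝ) ^ (n + 1)) := by
  have hp : p.Prime := Fact.out
  obtain ⟨a₀, k₀, rfl⟩ := disc_eq_cball p hK₀
  obtain ⟨s, hs⟩ := exists_scaling p a₀ k₀
  obtain ⟨e, he⟩ : ∃ e, 2 * ((n + 1) * (n * p)) ≤ p ^ e :=
    ⟨_, (Nat.lt_pow_self hp.one_lt).le⟩
  obtain ⟨g, hg⟩ : ∃ g, n * ((n + 1) * p ^ (e * n)) < p ^ g := ⟨_, Nat.lt_pow_self hp.one_lt⟩
  obtain ⟨q, hqle, hq⟩ := Nat.exists_infinite_primes (max p (detBound p n (g * n + 1)) + 1)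
  obtain ⟨r, hr⟩ : ∃ r, detBound p n (g * n + 1) ≤ p ^ r := ⟨_, (Nat.lt_pow_self hp.one_lt).le⟩
  have hqp : q ≠ p := by have := le_max_left p (detBound p n (g * n + 1)); omega
  have hqC : detBound p n (g * n + 1) < q := by
    have := le_max_right p (detBound p n (g * n + 1))
    omega
  -- algebraic numbers of height at most `A * p ^ M` approximate to within `p ^ (r + s - (n + 1) M)`
  obtain ⟨A, hA⟩ : ∃ A : ℕ, A = (n + 2) * q ^ 2 * p ^ (g * n + 1) * p ^ (s * n) := ⟨_, rfl⟩
  have hA1 : 1 ≤ A := by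
    have := hp.pos
    have := hq.pos
    rw [hA]
    exact Nat.one_le_iff_ne_zero.2 (by positivity)
  set V := (μ (cball p 0 (-((r + s : ℕ) : ℤ)))).toReal with hV
  have hVpos : 0 < V :=
    ENNReal.toReal_pos (measure_cball_pos p μ _ _).ne' (measure_cball_lt_top p μ _ _).ne
  have hp0 := p_pos p
  have hA0 : (0 : ℝ) < A := Nat.cast_pos.2 hA1
  refine ⟨(2 * V * ((A : ℝ) * p) ^ (n + 1))⁻¹, by positivity, fun K hKK₀ hK => ?_⟩
  obtain ⟨a, k, rfl⟩ := disc_eq_cball p hK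
  obtain ⟨M₀, hM₀⟩ := measure_not_good_le p μ he s a k
  set M₁ := M₀ + g + (2 * r + 1) + (r + s + k.toNat) with hM₁
  refine ⟨((A : ℝ) * (p : ℝ) ^ M₁) ^ (n + 1), fun T hT => ?_⟩
  -- the largest `M` for which the heights obtained are admissible
  obtain ⟨M, hM, hMT, hTM⟩ : ∃ M ≥ M₁, ((A : ℝ) * (p : ℝ) ^ M) ^ (n + 1) ≤ T ∧
      T < ((A : ℝ) * (p : ℝ) ^ (M + 1)) ^ (n + 1) := by
    have h0 : 0 < ((A : ℝ) * (p : ℝ) ^ M₁) ^ (n + 1) := by positivity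
    obtain ⟨j, hj, hj'⟩ := exists_nat_pow_near ((one_le_div h0).2 hT)
      (one_lt_pow₀ (one_lt_p p) (show n + 1 ≠ 0 by omega))
    refine ⟨M₁ + j, Nat.le_add_right _ _, ?_, ?_⟩
    · rw [le_div_iff₀ h0] at hj
      refine le_of_eq_of_le ?_ hj
      simp only [mul_pow, ← pow_mul, pow_add]
      ring
    · rw [div_lt_iff₀ h0] at hj'
      refine lt_of_lt_of_eq hj' ?_
      simp only [mul_pow, ← pow_mul, pow_add]
      ring
  set l : ℤ := ((n + 1) * M : ℕ) - ((r + s : ℕ) : ℤ) with hl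
  have hMM : M ≤ (n + 1) * M := Nat.le_mul_of_pos_left _ (Nat.succ_pos n)
  have hkl : k ≤ l := by
    have := Int.self_le_toNat k
    omega
  have hlT : T⁻¹ ≤ (p : ℝ) ^ (-l) := by
    have hT1 : (p : ℝ) ^ ((n + 1) * M) ≤ T := by
      refine le_trans ?_ hMT
      rw [mul_pow, ← pow_mul, mul_comm M]
      exact le_mul_of_one_le_left (by positivity) (one_le_pow₀ (Nat.one_le_cast.2 hA1))
    have hT2 : (p : ℝ) ^ l ≤ (p : ℝ) ^ ((n + 1) * M) := by
      rw [← zpow_natCast]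
      exact zpow_le_zpow_right₀ (one_lt_p p).le (by omega)
    rw [zpow_neg]
    exact inv_anti₀ (by positivity) (hT2.trans hT1)
  have hvol : V = (p : ℝ) ^ ((n + 1) * M) * (μ (cball p 0 l)).toReal := by
    have h1 := measure_cball_add p μ 0 0 (-((r + s : ℕ) : ℤ)) ((n + 1) * M)
    rw [show -((r + s : ℕ) : ℤ) + ((n + 1) * M : ℕ) = l by omega] at h1
    rw [hV, h1, ENNReal.toReal_mul, ENNReal.toReal_pow, ENNReal.toReal_natCast]
  have hE : ∀ y ∈ cball p a k, y ∉ {y ∈ cball p a k |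
      ¬ IsGood p n ((n + 1) * p ^ (e * n)) M ((p : ℚ_[p]) ^ s * y)} →
      ∃ α ∈ {α | IsAlgOfDeg p n α ∧ α ∈ cball p a k ∧ Hgt α ≤ A * p ^ M}, y ∈ cball p α l := by
    intro y hy hgood
    have hgood' : IsGood p n ((n + 1) * p ^ (e * n)) M ((p : ℚ_[p]) ^ s * y) := by
      by_contra h
      exact hgood ⟨hy, h⟩
    have hC : ((detBound p n (g * n + 1) : ℕ) : ℝ) ^ 2 < (p : ℝ) ^ ((n + 1) * M) := by
      have h1 : detBound p n (g * n + 1) ^ 2 < p ^ ((n + 1) * M) :=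
        calc _ ≤ (p ^ r) ^ 2 := Nat.pow_le_pow_left hr 2
          _ = p ^ (r * 2) := (pow_mul _ _ _).symm
          _ < _ := Nat.pow_lt_pow_right hp.one_lt (by omega)
      exact_mod_cast h1
    obtain ⟨α, hα, hαH, hαy⟩ := exists_algebraic_near p hn hg (by omega) hq hqp hqC hC s y
      (hs y (hKK₀ hy)) hgood'
    have hyα : y ∈ cball p α l := by
      rw [mem_cball, norm_sub_rev]
      rw [← mul_sub, norm_mul, norm_pow, Padic.norm_p, inv_pow,
        inv_mul_le_iff₀ (pow_pos hp0 s)] at hαy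
      refine hαy.trans ?_
      have h1 : ((detBound p n (g * n + 1) : ℕ) : ℝ) ≤ (p : ℝ) ^ r := by exact_mod_cast hr
      calc _ ≤ (p : ℝ) ^ s * ((p : ℝ) ^ r * ((p : ℝ) ^ ((n + 1) * M))⁻¹) := by gcongr
        _ = _ := by
          rw [← mul_assoc, ← pow_add, ← zpow_natCast, ← zpow_natCast, ← zpow_neg,
            ← zpow_add₀ hp0.ne']
          congr 1
          push_cast [hl]
          ring
    refine ⟨α, ⟨hα, ?_, ?_⟩, hyα⟩
    · have h1 : α ∈ cball p y l := by
        rw [mem_cball, norm_sub_rev]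
        exact hyα
      rw [← cball_eq p hy]
      exact cball_mono p y hkl h1
    · obtain ⟨R, hR1, hR2, hR3, hR4⟩ := hHgt α hα
      rw [← hR4]
      refine (hαH R hR1 hR2 hR3).trans_eq ?_
      rw [hA, pow_add]
      ring
  have ht : ∀ c : ℕ, c < ⌈(2 * V * ((A : ℝ) * p) ^ (n + 1))⁻¹ * T *
      (μ (cball p a k)).toReal⌉₊ →
      2 * (c * (μ (cball p 0 l)).toReal) < (μ (cball p a k)).toReal := by
    intro c hc
    rw [Nat.lt_ceil] at hc
    set W := (μ (cball p a k)).toReal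
    have hWpos : 0 < W :=
      ENNReal.toReal_pos (measure_cball_pos p μ _ _).ne' (measure_cball_lt_top p μ _ _).ne
    have hlpos : 0 < (μ (cball p 0 l)).toReal :=
      ENNReal.toReal_pos (measure_cball_pos p μ _ _).ne' (measure_cball_lt_top p μ _ _).ne
    have hT' : T < ((A : ℝ) * p) ^ (n + 1) * (p : ℝ) ^ ((n + 1) * M) := by
      refine hTM.trans_eq ?_
      simp only [mul_pow, ← pow_mul, pow_add]
      ring
    have h1 : (c : ℝ) * (2 * V) < (p : ℝ) ^ ((n + 1) * M) * W := by
      have h2 : (c : ℝ) < (2 * V * ((A : ℝ) * p) ^ (n + 1))⁻¹ *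
          (((A : ℝ) * p) ^ (n + 1) * (p : ℝ) ^ ((n + 1) * M)) * W := by
        refine hc.trans ?_
        gcongr
      calc _ < _ := mul_lt_mul_of_pos_right h2 (by positivity : 0 < 2 * V)
        _ = _ := by field_simp
    rw [hvol] at h1
    have hpp : (0 : ℝ) < (p : ℝ) ^ ((n + 1) * M) := by positivity
    refine lt_of_mul_lt_mul_left ?_ hpp.le
    linarith
  obtain ⟨γ, hγ, hsep⟩ :=
    exists_separated p μ a k l _ _ (hM₀ M (by omega)) hE _ ht
  refine ⟨_, γ, fun i => ⟨(hγ i).1, (hγ i).2.1⟩, fun i => ?_,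
    fun i j hij => hlT.trans (hsep i j hij), Nat.le_ceil _⟩
  refine le_trans ?_ hMT
  have : (Hgt (γ i) : ℝ) ≤ (A : ℝ) * (p : ℝ) ^ M := by exact_mod_cast (hγ i).2.2
  exact pow_le_pow_left₀ (Nat.cast_nonneg _) this _
end
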